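/- arXiv:1302.3859 — 2 statements merged into one kernel-verified Lean document; each statement's English description precedes it below -/
import Mathlib

section
/- Let (F_0, a) be initial data for the completion problem in ℂ^d with k ≥ d, let f : [0,∞) → [0,∞) be strictly convex, and let F = (F_0, G) ∈ C_a(F_0) be a global minimizer of P_f on C_a(F_0), with associated block structure 0 = s_0 < s_1 < … < s_p and constants c_1 > … > c_p > 0 as in the structure theorem, and suppose p > 1. Then the indices and constants are given recursively by: s_1 = max{j ≤ s_{p−1} : P_{1,j} = max_{1 ≤ i ≤ s_{p−1}} P_{1,i}} and c_1 = P_{1,s_1}; and for each j with s_j < s_{p−1}, s_{j+1} = max{r : s_j < r ≤ s_{p−1} and P_{s_j+1, r} = max_{s_j < i ≤ s_{p−1}} P_{s_j+1, i}} and c_{j+1} = P_{s_j+1, s_{j+1}}. -/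
open Finset
open scoped ComplexOrder

noncomputable def sortAsc {m : ℕ} (x : Fin m → ℝ) : Fin m → ℝ :=
  x ∘ Tuple.sort x

noncomputable def sortDesc {m : ℕ} (x : Fin m → ℝ) : Fin m → ℝ :=
  fun i => (x ∘ Tuple.sort x) i.rev

noncomputable def pad {k : ℕ} (x : Fin k → ℝ) (m : ℕ) : Fin m → ℝ :=
  fun i => if h : (i : ℕ) < k then x ⟨i, h⟩ else 0

/-- `MajorizedBy x y` means `x ≺ y`. -/
def MajorizedBy {m : ℕ} (x y : Fin m → ℝ) : Prop :=
  (∀ j : Fin m, ∑ i ∈ Finset.Iic j, sortDesc x i ≤ ∑ i ∈ Finset.Iic j, sortDesc y i) ∧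
    ∑ i, x i = ∑ i, y i

/-- Majorization of vectors of possibly different lengths, padding with zeros. -/
def MajorizedByPad {k m : ℕ} (x : Fin k → ℝ) (y : Fin m → ℝ) : Prop :=
  MajorizedBy (pad x (max k m)) (pad y (max k m))

/-- The frame operator `S_F = ∑ f_i f_i^*` of a finite sequence of vectors in `ℂ^d`. -/
noncomputable def frameOp {d n : ℕ} (F : Fin n → Fin d → ℂ) : Matrix (Fin d) (Fin d) ℂ :=
  ∑ l, Matrix.vecMulVec (F l) (star (F l))

/-- The squared norm `‖g‖²` of a vector in `ℂ^d`. -/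
noncomputable def normSqVec {d : ℕ} (g : Fin d → ℂ) : ℝ :=
  ∑ i, Complex.normSq (g i)

open scoped Classical in
/-- Eigenvalues of a (Hermitian) matrix arranged in decreasing order. -/
noncomputable def eigsDesc {d : ℕ} (S : Matrix (Fin d) (Fin d) ℂ) : Fin d → ℝ :=
  if h : S.IsHermitian then sortDesc h.eigenvalues else 0

open scoped Classical in
/-- Eigenvalues of a (Hermitian) matrix arranged in increasing order. -/
noncomputable def eigsAsc {d : ℕ} (S : Matrix (Fin d) (Fin d) ℂ) : Fin d → ℝ :=
  if h : S.IsHermitian then sortAsc h.eigenvalues else 0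

/-- `Γ_d(a)`: non-increasing nonnegative vectors in `ℝ^d` majorizing `a`. -/
def Gamma {k : ℕ} (d : ℕ) (a : Fin k → ℝ) : Set (Fin d → ℝ) :=
  {μ | Antitone μ ∧ (∀ i, 0 ≤ μ i) ∧ MajorizedByPad a μ}

/-- The convex potential `P_f = tr f(S) = ∑ f(λ_i(S))`. -/
noncomputable def potential {d : ℕ} (f : ℝ → ℝ) (S : Matrix (Fin d) (Fin d) ℂ) : ℝ :=
  ∑ i, f (eigsDesc S i)

/-- Final averages `Q_{j,r} = (1/(r-j)) (∑_{i=j+1}^k a_i + ∑_{i=j+1}^r λ_i)` (1-based). -/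
noncomputable def finalAvg {d k : ℕ} (lam : Fin d → ℝ) (a : Fin k → ℝ) (j r : ℕ) : ℝ :=
  ((∑ i : Fin k, if j ≤ (i : ℕ) then a i else 0) +
      (∑ i : Fin d, if j ≤ (i : ℕ) ∧ (i : ℕ) < r then lam i else 0)) / ((r : ℝ) - (j : ℝ))

/-- Initial averages: `initAvg lam a lo hi = P_{lo+1,hi}` (1-based), i.e. the average of
`h_i = λ_i + a_i` over the (0-based) index window `[lo, hi)`. -/
noncomputable def initAvg {d k : ℕ} (lam : Fin d → ℝ) (a : Fin k → ℝ) (lo hi : ℕ) : ℝ :=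
  ((∑ i : Fin d, if lo ≤ (i : ℕ) ∧ (i : ℕ) < hi then lam i else 0) +
      (∑ i : Fin k, if lo ≤ (i : ℕ) ∧ (i : ℕ) < hi then a i else 0)) / ((hi : ℝ) - (lo : ℝ))

/-- 1-based access to a vector indexed by `Fin d`. -/
noncomputable def get1 {d : ℕ} (lam : Fin d → ℝ) (i : ℕ) : ℝ :=
  if h : i - 1 < d then lam ⟨i - 1, h⟩ else 0

/-- The index `s` is feasible for the pair `(λ, a)`: the unique vector
`ν_s = (c·1_{r-s}, λ_{r+1},…,λ_d)` determined by the truncated data satisfies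
`a^s ≺ ν_s - λ^s`. -/
def FeasibleIdx {d k : ℕ} (lam : Fin d → ℝ) (a : Fin k → ℝ) (s : ℕ) : Prop :=
  ∃ r : ℕ, ∃ c : ℝ, s < r ∧ r ≤ d ∧ 0 < c ∧
    (∀ i : Fin d, s ≤ (i : ℕ) → (i : ℕ) < r → lam i ≤ c) ∧
    (∀ hrd : r < d, c ≤ lam ⟨r, hrd⟩) ∧
    ((r : ℝ) - (s : ℝ)) * c =
      (∑ i : Fin d, if s ≤ (i : ℕ) ∧ (i : ℕ) < r then lam i else 0) +
        (∑ i : Fin k, if s ≤ (i : ℕ) then a i else 0) ∧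
    MajorizedByPad (fun i : Fin (k - s) => a ⟨s + (i : ℕ), by have := i.isLt; omega⟩)
      (fun i : Fin (d - s) =>
        if s + (i : ℕ) < r then c - lam ⟨s + (i : ℕ), by have := i.isLt; omega⟩ else 0)


/-- The vector obtained from `y` by moving `δ` from coordinate `i` to coordinate `j`. -/
def tmove {k : ℕ} (y : Fin k → ℝ) (i j : Fin k) (δ : ℝ) : Fin k → ℝ :=
  fun l => y l + (if l = j then δ else 0) - (if l = i then δ else 0)

/-- Sum of the first `r` coordinates. -/
def psum {k : ℕ} (y : Fin k → ℝ) (r : ℕ) : ℝ := ∑ i : Fin k, if (i : ℕ) < r then y i else 0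

lemma psum_tmove {k : ℕ} (y : Fin k → ℝ) (i j : Fin k) (δ : ℝ) (r : ℕ) :
    psum (tmove y i j δ) r = psum y r + (if (j : ℕ) < r then δ else 0)
      - (if (i : ℕ) < r then δ else 0) := by
  have h : ∀ l : Fin k, (if (l : ℕ) < r then tmove y i j δ l else 0) =
      (if (l : ℕ) < r then y l else 0) + (if l = j then (if (j : ℕ) < r then δ else 0) else 0)
        - (if l = i then (if (i : ℕ) < r then δ else 0) else 0) := by
    intro l
    unfold tmove
    by_cases h1 : l = j <;> by_cases h2 : l = i <;> by_cases h3 : (l : ℕ) < r <;> simp_all <;> split_ifs <;> first | omega | simp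
  unfold psum
  rw [Finset.sum_congr rfl (fun l _ => h l)]
  simp [Finset.sum_add_distrib, Finset.sum_sub_distrib]

lemma psum_full {k : ℕ} (y : Fin k → ℝ) (r : ℕ) (hr : k ≤ r) : psum y r = ∑ i, y i := by
  unfold psum
  refine Finset.sum_congr rfl fun i _ => ?_
  rw [if_pos (lt_of_lt_of_le i.2 hr)]

theorem tmove_reach {k : ℕ} (P : (Fin k → ℝ) → Prop)
    (hP : ∀ y i j δ, P y → i ≠ j → 0 ≤ δ → δ ≤ y i - y j → P (tmove y i j δ))
    (x : Fin k → ℝ) (hx : Antitone x) (N : ℕ) : ∀ y, P y → (∀ r, psum x r ≤ psum y r) →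
      ∑ i, x i = ∑ i, y i → (univ.filter fun i => x i ≠ y i).card ≤ N → P x := by
  induction N with
  | zero =>
    intro y hy _ _ hc
    have : x = y := by
      funext i
      by_contra h
      have : i ∈ (univ.filter fun i => x i ≠ y i) := by simp [h]
      rw [Nat.le_zero, Finset.card_eq_zero] at hc
      simp [hc] at this
    rwa [this]
  | succ N ih =>
    intro y hy hps hsum hc
    by_cases hne : ∃ l, y l < x l
    · obtain ⟨l, hl, hlmin⟩ : ∃ l, y l < x l ∧ ∀ i, i < l → x i ≤ y i := by
        classical
        obtain ⟨l, hl, hm⟩ := exists_minimal_of_wellFoundedLT (fun l => y l < x l) hne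
        refine ⟨l, hl, fun i hi => ?_⟩
        by_contra hcon
        push Not at hcon
        exact absurd (hm hcon hi.le) (not_le.mpr hi)
      obtain ⟨j, hjl, hj⟩ : ∃ j, j < l ∧ x j < y j := by
        by_contra hcon
        push Not at hcon
        have := hps (l + 1)
        refine absurd this (not_le.mpr ?_)
        unfold psum
        refine Finset.sum_lt_sum (fun i _ => ?_) ⟨l, mem_univ _, by simpa using hl⟩
        split_ifs with h
        · rcases eq_or_lt_of_le (Nat.lt_succ_iff.mp h) with h | h
          · have : i = l := Fin.ext h
            rw [this]; exact hl.le
          · exact hcon i h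
        · exact le_rfl
      have hjne : j ≠ l := hjl.ne
      have hxjl := hx hjl.le
      set δ := min (y j - x j) (x l - y l) with hδ
      have hδ0 : 0 < δ := lt_min (by linarith) (by linarith)
      have hδ1 : δ ≤ y j - x j := min_le_left _ _
      have hδ2 : δ ≤ x l - y l := min_le_right _ _
      have vj : tmove y j l δ j = y j - δ := by simp [tmove, hjne]
      have vl : tmove y j l δ l = y l + δ := by simp [tmove, hjne.symm]
      have vo : ∀ i, i ≠ j → i ≠ l → tmove y j l δ i = y i := by
        intro i h1 h2; simp [tmove, h1, h2]
      refine ih (tmove y j l δ) (hP y j l δ hy hjne hδ0.le (by linarith)) ?_ ?_ ?_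
      · intro r
        rw [psum_tmove]
        have := hps r
        by_cases h1 : (j : ℕ) < r
        · by_cases h2 : (l : ℕ) < r
          · simp [h1, h2, this]
          · simp only [h1, h2, if_true, if_false, add_zero]
            have : y j - x j ≤ psum y r - psum x r := by
              unfold psum
              rw [← Finset.sum_sub_distrib]
              have := Finset.single_le_sum (s := univ) (a := j) (f := fun i : Fin k => (if (i : ℕ) < r then y i else 0) -
                (if (i : ℕ) < r then x i else 0)) (fun i _ => by
                  split_ifs with h
                  · have := hlmin i (by rw [Fin.lt_def]; omega)
                    linarith
                  · simp) (mem_univ j)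
              simpa [h1] using this
            linarith
        · have h2 : ¬ (l : ℕ) < r := by rw [Fin.lt_def] at hjl; omega
          simp [h1, h2, this]
      · rw [← psum_full (tmove y j l δ) k le_rfl, psum_tmove, psum_full y k le_rfl]
        simp [hsum]
      · have hsub : (univ.filter fun i => x i ≠ tmove y j l δ i) ⊂ (univ.filter fun i => x i ≠ y i) := by
          rw [Finset.ssubset_iff_of_subset]
          · rcases min_choice (y j - x j) (x l - y l) with h | h
            · refine ⟨j, by simp [hj.ne], ?_⟩
              rw [mem_filter, vj, hδ, h]; simp
            · refine ⟨l, by simp [hl.ne'], ?_⟩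
              rw [mem_filter, vl, hδ, h]; simp
          · intro i hi
            rw [mem_filter] at hi ⊢
            refine ⟨mem_univ _, ?_⟩
            by_cases h1 : i = j
            · rw [h1]; exact hj.ne
            by_cases h2 : i = l
            · rw [h2]; exact hl.ne'
            · rw [vo i h1 h2] at hi; exact hi.2
        have := Finset.card_lt_card hsub
        omega
    · push Not at hne
      have : x = y := by
        funext i
        exact (Finset.sum_eq_sum_iff_of_le (fun i _ => hne i)).mp hsum i (mem_univ i)
      rwa [this]

lemma convex_move {f : ℝ → ℝ} (hf : StrictConvexOn ℝ (Set.Ici 0) f) {p q δ : ℝ} (hq : 0 ≤ q)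
    (h0 : 0 < δ) (h1 : δ < p - q) : f (p - δ) + f (q + δ) < f p + f q := by
  have hp : 0 ≤ p := by linarith
  have hpq : q < p := by linarith
  have e : 0 < p - q := by linarith
  set w := δ / (p - q) with hw
  have hw0 : 0 < w := by positivity
  have hw1 : w < 1 := by rw [hw, div_lt_one e]; exact h1
  have hwe : w * (p - q) = δ := by rw [hw]; field_simp
  have A := hf.2 (Set.mem_Ici.mpr hp) (Set.mem_Ici.mpr hq) hpq.ne'
    (show 0 < 1 - w by linarith) hw0 (by ring)
  have B := hf.2 (Set.mem_Ici.mpr hp) (Set.mem_Ici.mpr hq) hpq.ne'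
     hw0 (show 0 < 1 - w by linarith) (by ring)
  simp only [smul_eq_mul] at A B
  have e1 : (1 - w) * p + w * q = p - δ := by rw [← hwe]; ring
  have e2 : w * p + (1 - w) * q = q + δ := by rw [← hwe]; ring
  rw [e1] at A
  rw [e2] at B
  linarith

lemma convex_move_le {f : ℝ → ℝ} (hf : StrictConvexOn ℝ (Set.Ici 0) f) {p q δ : ℝ} (hq : 0 ≤ q)
    (h0 : 0 ≤ δ) (h1 : δ ≤ p - q) : f (p - δ) + f (q + δ) ≤ f p + f q := by
  rcases h0.eq_or_lt with rfl | h0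
  · simp
  rcases h1.eq_or_lt with rfl | h1
  · have e1 : p - (p - q) = q := by ring
    have e2 : q + (p - q) = p := by ring
    rw [e1, e2, add_comm]
  · exact (convex_move hf hq h0 h1).le

lemma sum_tmove {k : ℕ} (F : Fin k → ℝ → ℝ) (y : Fin k → ℝ) (i j : Fin k) (hij : i ≠ j) (δ : ℝ) :
    ∑ l, F l (tmove y i j δ l) - ∑ l, F l (y l) =
      (F i (y i - δ) - F i (y i)) + (F j (y j + δ) - F j (y j)) := by
  rw [← Finset.sum_sub_distrib, Fintype.sum_eq_add i j hij]
  · simp [tmove, hij, hij.symm]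
  · rintro l ⟨h1, h2⟩
    simp [tmove, h1, h2]

theorem karamata {d : ℕ} {f : ℝ → ℝ} (hf : StrictConvexOn ℝ (Set.Ici 0) f) (x y : Fin d → ℝ)
    (hx : Antitone x) (hy : ∀ i, 0 ≤ y i) (hps : ∀ r, psum x r ≤ psum y r)
    (hs : ∑ i, x i = ∑ i, y i) : ∑ i, f (x i) ≤ ∑ i, f (y i) := by
  have := tmove_reach (fun z => (∀ i, 0 ≤ z i) ∧ ∑ i, f (z i) ≤ ∑ i, f (y i)) ?_ x hx _ y
    ⟨hy, le_rfl⟩ hps hs le_rfl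
  · exact this.2
  · rintro z i j δ ⟨hz, hzf⟩ hij h0 h1
    constructor
    · intro l
      have := hz l
      have := hz j
      unfold tmove
      by_cases h2 : l = j
      · subst h2; simp [hij.symm]; linarith
      · by_cases h3 : l = i
        · subst h3; simp [h2]; linarith
        · simp [h2, h3, hz l]
    · have := sum_tmove (fun _ => f) z i j hij δ
      have := convex_move_le hf (hz j) h0 h1
      linarith

/-- From hinge inequalities to the convex-function inequality. -/
theorem hinge_karamata {d : ℕ} {f : ℝ → ℝ} (hf : StrictConvexOn ℝ (Set.Ici 0) f) (x y : Fin d → ℝ)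
    (hyanti : Antitone y) (hy : ∀ i, 0 ≤ y i)
    (hh : ∀ t, ∑ i, max (x i - t) 0 ≤ ∑ i, max (y i - t) 0)
    (hs : ∑ i, x i = ∑ i, y i) : ∑ i, f (x i) ≤ ∑ i, f (y i) := by
  obtain ⟨σ, hσ⟩ : ∃ σ : Equiv.Perm (Fin d), Antitone (x ∘ σ) := by
    refine ⟨Fin.revPerm.trans (Tuple.sort x), ?_⟩
    intro i j hij
    exact Tuple.monotone_sort x (Fin.rev_le_rev.mpr hij)
  have hre : ∀ g : ℝ → ℝ, ∑ i, g ((x ∘ σ) i) = ∑ i, g (x i) := fun g =>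
    Equiv.sum_comp σ (fun i => g (x i))
  rw [← hre f]
  have hs' : ∑ i, (x ∘ σ) i = ∑ i, y i := by rw [← hs]; exact hre id
  refine karamata hf _ y hσ hy ?_ hs'
  intro r
  rcases le_or_gt d r with hr | hr
  · rw [psum_full _ _ hr, psum_full _ _ hr, hs']
  set t := y ⟨r, hr⟩ with ht
  have h1 := hh t
  rw [← hre (fun z => max (z - t) 0)] at h1
  have h2 : psum (x ∘ σ) r - psum (fun _ : Fin d => t) r ≤ ∑ i, max ((x ∘ σ) i - t) 0 := by
    unfold psum
    rw [← Finset.sum_sub_distrib]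
    refine Finset.sum_le_sum fun i _ => ?_
    split_ifs
    · exact le_max_left _ _
    · simp
  have h3 : psum y r - psum (fun _ : Fin d => t) r = ∑ i, max (y i - t) 0 := by
    unfold psum
    rw [← Finset.sum_sub_distrib]
    refine Finset.sum_congr rfl fun i _ => ?_
    split_ifs with h
    · have : t ≤ y i := hyanti (by rw [Fin.le_def]; exact h.le)
      rw [max_eq_left]; linarith
    · have : y i ≤ t := hyanti (by rw [Fin.le_def]; simp at h; exact h)
      rw [max_eq_right] <;> linarith
  linarith

section linalg

variable {d : ℕ}

/-- `EE d` is `ℂ^d` with the Euclidean norm. -/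
abbrev EE (d : ℕ) := EuclideanSpace ℂ (Fin d)

/-- The orthonormal basis `u` diagonalizes `A` with real eigenvalues `α`. -/
def IsEig (A : EE d →ₗ[ℂ] EE d) (u : OrthonormalBasis (Fin d) ℂ (EE d)) (α : Fin d → ℝ) : Prop :=
  ∀ i, A (u i) = (α i : ℂ) • u i

lemma IsEig.apply {A : EE d →ₗ[ℂ] EE d} {u : OrthonormalBasis (Fin d) ℂ (EE d)} {α : Fin d → ℝ}
    (h : IsEig A u α) (x : EE d) : A x = ∑ i, ((α i : ℂ) * inner ℂ (u i) x) • u i := by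
  conv_lhs => rw [← u.sum_repr' x]
  rw [map_sum]
  refine Finset.sum_congr rfl fun i _ => ?_
  rw [map_smul, h i, smul_smul, mul_comm]

lemma IsEig.quad {A : EE d →ₗ[ℂ] EE d} {u : OrthonormalBasis (Fin d) ℂ (EE d)} {α : Fin d → ℝ}
    (h : IsEig A u α) (x : EE d) :
    (inner ℂ x (A x)).re = ∑ i, α i * ‖inner ℂ (u i) x‖ ^ 2 := by
  rw [h.apply, inner_sum, Complex.re_sum]
  refine Finset.sum_congr rfl fun i _ => ?_
  rw [inner_smul_right, ← inner_conj_symm x (u i), mul_assoc, Complex.mul_conj,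
    Complex.normSq_eq_norm_sq, ← Complex.ofReal_mul, Complex.ofReal_re]

lemma norm_quad (u : OrthonormalBasis (Fin d) ℂ (EE d)) (x : EE d) :
    ‖x‖ ^ 2 = ∑ i, ‖inner ℂ (u i) x‖ ^ 2 := (u.sum_sq_norm_inner_right x).symm

lemma IsEig.trace {A : EE d →ₗ[ℂ] EE d} {u : OrthonormalBasis (Fin d) ℂ (EE d)} {α : Fin d → ℝ}
    (h : IsEig A u α) : LinearMap.trace ℂ _ A = ((∑ i, α i : ℝ) : ℂ) := by
  rw [LinearMap.trace_eq_sum_inner A u, Complex.ofReal_sum]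
  refine Finset.sum_congr rfl fun i _ => ?_
  rw [h i, inner_smul_right, inner_self_eq_norm_sq_to_K]
  simp

lemma IsEig.symm {A : EE d →ₗ[ℂ] EE d} {u : OrthonormalBasis (Fin d) ℂ (EE d)} {α : Fin d → ℝ}
    (h : IsEig A u α) : A.IsSymmetric := by
  intro x y
  rw [h.apply x, h.apply y, sum_inner, inner_sum]
  refine Finset.sum_congr rfl fun i _ => ?_
  rw [inner_smul_left, inner_smul_right, map_mul, inner_conj_symm, Complex.conj_ofReal]
  ring

lemma exists_isEig {A : EE d →ₗ[ℂ] EE d} (hA : A.IsSymmetric) :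
    ∃ u α, IsEig A u α ∧ Antitone α :=
  ⟨hA.eigenvectorBasis (by simp), hA.eigenvalues (by simp),
    fun i => hA.apply_eigenvectorBasis (by simp) i, hA.eigenvalues_antitone (by simp)⟩

lemma exists_common (u : OrthonormalBasis (Fin d) ℂ (EE d)) (z : Fin d → EE d) (m : Fin d) :
    ∃ x : EE d, x ≠ 0 ∧ (∀ l, l < m → inner ℂ (z l) x = 0) ∧
      (∀ l, m < l → inner ℂ (u l) x = 0) := by
  let w : Fin d → EE d := fun l => if l < m then z l else if m < l then u l else 0
  let L : EE d →ₗ[ℂ] (Fin d → ℂ) := LinearMap.pi fun l => (innerₛₗ ℂ (w l))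
  have hL : ∀ x l, L x l = inner ℂ (w l) x := fun x l => rfl
  have hns : ¬ Function.Surjective L := by
    intro hs
    obtain ⟨x, hx⟩ := hs (Pi.single m 1)
    have := congrFun hx m
    rw [hL] at this
    simp [w] at this
  have hni : ¬ Function.Injective L := by
    intro hi
    exact hns ((LinearMap.injective_iff_surjective_of_finrank_eq_finrank (by simp)).mp hi)
  rw [← LinearMap.ker_eq_bot, Submodule.eq_bot_iff] at hni
  push Not at hni
  obtain ⟨x, hx, hx0⟩ := hni
  have hx' : ∀ l, inner ℂ (w l) x = 0 := fun l => by
    rw [← hL, LinearMap.mem_ker.mp hx]; rfl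
  refine ⟨x, hx0, fun l hl => ?_, fun l hl => ?_⟩
  · have := hx' l
    simpa [w, hl] using this
  · have := hx' l
    simpa [w, hl, not_lt.mpr hl.le] using this

lemma quad_lower {A : EE d →ₗ[ℂ] EE d} {u : OrthonormalBasis (Fin d) ℂ (EE d)} {α : Fin d → ℝ}
    (h : IsEig A u α) (hα : Antitone α) (m : Fin d) (x : EE d)
    (hx : ∀ l, m < l → inner ℂ (u l) x = 0) : α m * ‖x‖ ^ 2 ≤ (inner ℂ x (A x)).re := by
  rw [h.quad, norm_quad u, Finset.mul_sum]
  refine Finset.sum_le_sum fun i _ => ?_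
  rcases lt_or_ge m i with hi | hi
  · simp [hx i hi]
  · exact mul_le_mul_of_nonneg_right (hα hi) (by positivity)

lemma quad_upper {A : EE d →ₗ[ℂ] EE d} {u : OrthonormalBasis (Fin d) ℂ (EE d)} {α : Fin d → ℝ}
    (h : IsEig A u α) (hα : Antitone α) (m : Fin d) (x : EE d)
    (hx : ∀ l, l < m → inner ℂ (u l) x = 0) : (inner ℂ x (A x)).re ≤ α m * ‖x‖ ^ 2 := by
  rw [h.quad, norm_quad u, Finset.mul_sum]
  refine Finset.sum_le_sum fun i _ => ?_
  rcases lt_or_ge i m with hi | hi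
  · simp [hx i hi]
  · exact mul_le_mul_of_nonneg_right (hα hi) (by positivity)

theorem weyl {A B : EE d →ₗ[ℂ] EE d} {u v : OrthonormalBasis (Fin d) ℂ (EE d)} {α β : Fin d → ℝ}
    (hA : IsEig A u α) (hB : IsEig B v β) (hα : Antitone α) (hβ : Antitone β)
    (hAB : ∀ x, (inner ℂ x (A x)).re ≤ (inner ℂ x (B x)).re) (m : Fin d) : α m ≤ β m := by
  obtain ⟨x, hx0, h1, h2⟩ := exists_common u v m
  have a1 := quad_lower hA hα m x h2
  have a2 := quad_upper hB hβ m x h1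
  have hpos : 0 < ‖x‖ ^ 2 := by positivity
  exact le_of_mul_le_mul_right (a1.trans ((hAB x).trans a2)) hpos

/-- The operator with eigenbasis `u` and eigenvalues `α`. -/
noncomputable def diagOp (u : OrthonormalBasis (Fin d) ℂ (EE d)) (α : Fin d → ℝ) :
    EE d →ₗ[ℂ] EE d :=
  ∑ i, ((α i : ℂ) • (innerₛₗ ℂ (u i))).smulRight (u i)

lemma diagOp_apply (u : OrthonormalBasis (Fin d) ℂ (EE d)) (α : Fin d → ℝ) (x : EE d) :
    diagOp u α x = ∑ i, ((α i : ℂ) * inner ℂ (u i) x) • u i := by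
  simp [diagOp, LinearMap.sum_apply]

lemma isEig_diagOp (u : OrthonormalBasis (Fin d) ℂ (EE d)) (α : Fin d → ℝ) :
    IsEig (diagOp u α) u α := by
  intro i
  rw [diagOp_apply, Finset.sum_eq_single i]
  · simp
  · intro j _ hj
    rw [u.orthonormal.2 hj]; simp
  · simp

theorem lidskii {A B : EE d →ₗ[ℂ] EE d} {u v w : OrthonormalBasis (Fin d) ℂ (EE d)}
    {lam μ y : Fin d → ℝ} (hA : IsEig A u lam) (hB : IsEig B v μ) (hC : IsEig (A + B) w y)
    (hlam : Monotone lam) (hμ : Antitone μ) (t : ℝ) :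
    ∑ i, max (lam i + μ i - t) 0 ≤ ∑ i, max (y i - t) 0 := by
  set N := diagOp w (fun i => max (y i - t) 0) with hN
  have hNe : IsEig N w (fun i => max (y i - t) 0) := isEig_diagOp _ _
  have hMs : (N - A).IsSymmetric := hNe.symm.sub hA.symm
  obtain ⟨z, ν, hM, hν⟩ := exists_isEig hMs
  have hnegA : IsEig (-A) u (fun i => - lam i) := by
    intro i; simp [hA i]
  have hBt : IsEig (B - (t : ℂ) • LinearMap.id) v (fun i => μ i - t) := by
    intro i; simp [hB i, sub_smul]
  have h1 : ∀ i, - lam i ≤ ν i := by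
    refine weyl hnegA hM (fun i j hij => neg_le_neg (hlam hij)) hν ?_
    intro x
    rw [LinearMap.sub_apply, LinearMap.neg_apply, inner_sub_right, inner_neg_right, Complex.sub_re,
      Complex.neg_re, hNe.quad]
    have : 0 ≤ ∑ i, max (y i - t) 0 * ‖inner ℂ (w i) x‖ ^ 2 :=
      Finset.sum_nonneg fun i _ => by positivity
    linarith
  have h2 : ∀ i, μ i - t ≤ ν i := by
    refine weyl hBt hM (fun i j hij => sub_le_sub_right (hμ hij) t) hν ?_
    intro x
    have e : (inner ℂ x (A x)).re + (inner ℂ x (B x)).re =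
        ∑ i, y i * ‖inner ℂ (w i) x‖ ^ 2 := by
      rw [← hC.quad, LinearMap.add_apply, inner_add_right, Complex.add_re]
    have e2 : (inner ℂ x ((B - (t : ℂ) • (LinearMap.id : EE d →ₗ[ℂ] EE d)) x)).re =
        (inner ℂ x (B x)).re - t * ‖x‖ ^ 2 := by
      rw [LinearMap.sub_apply, inner_sub_right, Complex.sub_re, LinearMap.smul_apply,
        LinearMap.id_apply, inner_smul_right, inner_self_eq_norm_sq_to_K, Complex.re_ofReal_mul]
      norm_cast
    rw [e2, LinearMap.sub_apply, inner_sub_right, Complex.sub_re, hNe.quad, norm_quad w x,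
      Finset.mul_sum]
    have : ∑ i, y i * ‖inner ℂ (w i) x‖ ^ 2 - ∑ i, t * ‖inner ℂ (w i) x‖ ^ 2 ≤
        ∑ i, max (y i - t) 0 * ‖inner ℂ (w i) x‖ ^ 2 := by
      rw [← Finset.sum_sub_distrib]
      refine Finset.sum_le_sum fun i _ => ?_
      rw [← sub_mul]
      exact mul_le_mul_of_nonneg_right (le_max_left _ _) (by positivity)
    linarith
  have h3 : ∑ i, ν i = ∑ i, max (y i - t) 0 - ∑ i, lam i := by
    have := hM.trace
    rw [map_sub, hNe.trace, hA.trace] at this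
    exact_mod_cast this.symm
  calc ∑ i, max (lam i + μ i - t) 0 ≤ ∑ i, (ν i + lam i) := by
        refine Finset.sum_le_sum fun i _ => max_le ?_ ?_
        · linarith [h2 i]
        · linarith [h1 i]
    _ = _ := by rw [Finset.sum_add_distrib, h3]; ring

/-- The frame operator as a linear map. -/
noncomputable def frameLin {k : ℕ} (g : Fin k → EE d) : EE d →ₗ[ℂ] EE d :=
  ∑ i, (innerₛₗ ℂ (g i)).smulRight (g i)

lemma frameLin_apply {k : ℕ} (g : Fin k → EE d) (x : EE d) :
    frameLin g x = ∑ i, inner ℂ (g i) x • g i := by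
  simp [frameLin, LinearMap.sum_apply]

lemma frameLin_quad {k : ℕ} (g : Fin k → EE d) (x : EE d) :
    (inner ℂ x (frameLin g x)).re = ∑ i, ‖inner ℂ (g i) x‖ ^ 2 := by
  rw [frameLin_apply, inner_sum, Complex.re_sum]
  refine Finset.sum_congr rfl fun i _ => ?_
  rw [inner_smul_right, ← inner_conj_symm x (g i), Complex.mul_conj,
    Complex.normSq_eq_norm_sq, Complex.ofReal_re]

lemma frameLin_symm {k : ℕ} (g : Fin k → EE d) : (frameLin g).IsSymmetric := by
  intro x y
  rw [frameLin_apply, frameLin_apply, sum_inner, inner_sum]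
  refine Finset.sum_congr rfl fun i _ => ?_
  rw [inner_smul_left, inner_smul_right, inner_conj_symm, mul_comm]

lemma frameLin_trace {k : ℕ} (g : Fin k → EE d) :
    LinearMap.trace ℂ _ (frameLin g) = ((∑ i, ‖g i‖ ^ 2 : ℝ) : ℂ) := by
  rw [frameLin, map_sum, Complex.ofReal_sum]
  refine Finset.sum_congr rfl fun i _ => ?_
  rw [LinearMap.trace_smulRight]
  simp [inner_self_eq_norm_sq_to_K]

/-- Easy half of Schur–Horn. -/
theorem kyfan {k : ℕ} (hdk : d ≤ k) (g : Fin k → EE d) {v : OrthonormalBasis (Fin d) ℂ (EE d)}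
    {μ : Fin d → ℝ} (hB : IsEig (frameLin g) v μ) (hμ : Antitone μ) (r : ℕ) (hr : r ≤ d) :
    ∑ i : Fin k, (if (i : ℕ) < r then ‖g i‖ ^ 2 else 0) ≤
      ∑ i : Fin d, (if (i : ℕ) < r then μ i else 0) := by
  set g' : Fin k → EE d := fun i => if (i : ℕ) < r then g i else 0 with hg'
  obtain ⟨u, τ, hT, hτ⟩ := exists_isEig (frameLin_symm g')
  have h1 : ∀ m, τ m ≤ μ m := by
    refine weyl hT hB hτ hμ fun x => ?_
    rw [frameLin_quad, frameLin_quad]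
    refine Finset.sum_le_sum fun i _ => ?_
    by_cases h : (i : ℕ) < r
    · simp [hg', h]
    · simp only [hg', h, if_false, inner_zero_left, norm_zero]
      simp
  have h2 : ∀ m : Fin d, r ≤ m → τ m ≤ 0 := by
    intro m hm
    obtain ⟨x, hx0, e1, e2⟩ := exists_common u (fun l => g' (Fin.castLE hdk l)) m
    have a1 := quad_lower hT hτ m x e2
    have : (inner ℂ x (frameLin g' x)).re = 0 := by
      rw [frameLin_quad]
      refine Finset.sum_eq_zero fun i _ => ?_
      by_cases h : (i : ℕ) < r
      · have := e1 ⟨i, by omega⟩ (by rw [Fin.lt_def]; exact lt_of_lt_of_le h hm)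
        have e : Fin.castLE hdk ⟨i, by omega⟩ = i := rfl
        rw [e] at this
        simp [this]
      · simp [hg', h]
    rw [this] at a1
    have hpos : 0 < ‖x‖ ^ 2 := by positivity
    by_contra hc
    push Not at hc
    have := mul_pos hc hpos
    linarith
  have h3 : ∑ i : Fin k, (if (i : ℕ) < r then ‖g i‖ ^ 2 else 0) = ∑ i, τ i := by
    have := hT.trace
    rw [frameLin_trace] at this
    have e : ∑ i, ‖g' i‖ ^ 2 = ∑ i, τ i := by exact_mod_cast this
    rw [← e]
    refine Finset.sum_congr rfl fun i _ => ?_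
    by_cases h : (i : ℕ) < r <;> simp [hg', h]
  rw [h3]
  refine Finset.sum_le_sum fun i _ => ?_
  split_ifs with h
  · exact h1 i
  · exact h2 i (by omega)

end linalg

section realize

variable {d : ℕ}

/-- Hard half of Schur–Horn, in frame form. -/
theorem realize {k : ℕ} (hdk : d ≤ k) (u : OrthonormalBasis (Fin d) ℂ (EE d)) (m : Fin d → ℝ)
    (hm : ∀ i, 0 ≤ m i) (a : Fin k → ℝ) (ha : Antitone a)
    (hps : ∀ r, r ≤ d → psum a r ≤ psum m r) (hnn : ∀ i, 0 ≤ a i) (hs : ∑ i, a i = ∑ i, m i) :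
    ∃ g : Fin k → EE d, (∀ i, ‖g i‖ ^ 2 = a i) ∧ IsEig (frameLin g) u m := by
  set M : Fin k → ℝ := fun i => if h : (i : ℕ) < d then m ⟨i, h⟩ else 0 with hM
  have hMsum : ∀ {V : Type} [AddCommMonoid V] (F : Fin k → V) (H : Fin d → V),
      (∀ i : Fin d, F (Fin.castLE hdk i) = H i) → (∀ i : Fin k, d ≤ i → F i = 0) →
      ∑ i, F i = ∑ i, H i := by
    intro V _ F H h1 h2
    obtain ⟨e, rfl⟩ := Nat.exists_eq_add_of_le hdk
    rw [Fin.sum_univ_add]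
    rw [Finset.sum_eq_zero (s := univ (α := Fin e)) (fun i _ => h2 _ (by simp)), add_zero]
    exact Finset.sum_congr rfl fun i _ => h1 i
  have hMp : ∀ r, psum M r = psum m r := by
    intro r
    refine hMsum _ _ (fun i => ?_) (fun i hi => ?_)
    · simp [hM]
    · simp [hM, not_lt.mpr hi]
  have := tmove_reach (fun b => ∃ g : Fin k → EE d, (∀ i, ‖g i‖ ^ 2 = b i) ∧
    frameLin g = diagOp u m) ?_ a ha _ M ?_ ?_ ?_ le_rfl
  · obtain ⟨g, h1, h2⟩ := this
    exact ⟨g, h1, h2 ▸ isEig_diagOp u m⟩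
  · rintro b i j δ ⟨g, hg, hgf⟩ hij h0 h1
    obtain ⟨θ, hθ⟩ : ∃ θ : ℝ, ‖(Real.cos θ : ℂ) • g i + (Real.sin θ : ℂ) • g j‖ ^ 2 = b i - δ := by
      let φ : ℝ → ℝ := fun θ => ‖(Real.cos θ : ℂ) • g i + (Real.sin θ : ℂ) • g j‖ ^ 2
      have hφ : Continuous φ := by fun_prop
      have := intermediate_value_Icc' (f := φ) (a := 0) (b := Real.pi / 2)
        (by positivity) hφ.continuousOn
      have e0 : φ 0 = b i := by simp [φ, hg]
      have e1 : φ (Real.pi / 2) = b j := by simp [φ, hg]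
      rw [e0, e1] at this
      obtain ⟨θ, -, h⟩ := this (show b i - δ ∈ Set.Icc (b j) (b i) from ⟨by linarith, by linarith⟩)
      exact ⟨θ, h⟩
    set p := (Real.cos θ : ℂ) • g i + (Real.sin θ : ℂ) • g j with hp
    set q := -(Real.sin θ : ℂ) • g i + (Real.cos θ : ℂ) • g j with hq
    have hcs : (Real.cos θ : ℂ) * Real.cos θ + Real.sin θ * Real.sin θ = 1 := by
      have := Real.cos_sq_add_sin_sq θ
      rw [pow_two, pow_two] at this
      exact_mod_cast this
    have hrank : ∀ x : EE d, inner ℂ p x • p + inner ℂ q x • q =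
        inner ℂ (g i) x • g i + inner ℂ (g j) x • g j := by
      intro x
      rw [hp, hq]
      simp only [inner_add_left, inner_smul_left, map_neg, Complex.conj_ofReal]
      generalize inner ℂ (g i) x = A
      generalize inner ℂ (g j) x = B
      generalize (Real.cos θ : ℂ) = C at *
      generalize (Real.sin θ : ℂ) = S at *
      have e1 : A • g i = ((C * C + S * S) * A) • g i := by rw [hcs, one_mul]
      have e2 : B • g j = ((C * C + S * S) * B) • g j := by rw [hcs, one_mul]
      rw [e1, e2]
      module
    have hnorm : ‖p‖ ^ 2 + ‖q‖ ^ 2 = ‖g i‖ ^ 2 + ‖g j‖ ^ 2 := by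
      have e1 : ‖p‖ ^ 2 = Real.cos θ ^ 2 * ‖g i‖ ^ 2 + 2 * (Real.cos θ * Real.sin θ * (inner ℂ (g i) (g j)).re) +
          Real.sin θ ^ 2 * ‖g j‖ ^ 2 := by
        rw [hp, @norm_add_sq ℂ, norm_smul, norm_smul, inner_smul_left, inner_smul_right,
          Complex.conj_ofReal, mul_pow, mul_pow, Complex.norm_real, Complex.norm_real,
          Real.norm_eq_abs, Real.norm_eq_abs, sq_abs, sq_abs, ← mul_assoc (Real.cos θ : ℂ),
          ← Complex.ofReal_mul]
        exact congrArg (fun z => _ + 2 * z + _) (Complex.re_ofReal_mul _ _)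
      have e2 : ‖q‖ ^ 2 = Real.sin θ ^ 2 * ‖g i‖ ^ 2 + 2 * (-Real.sin θ * Real.cos θ * (inner ℂ (g i) (g j)).re) +
          Real.cos θ ^ 2 * ‖g j‖ ^ 2 := by
        rw [hq, ← Complex.ofReal_neg, @norm_add_sq ℂ, norm_smul, norm_smul, inner_smul_left, inner_smul_right,
          Complex.conj_ofReal, mul_pow, mul_pow, Complex.norm_real, Complex.norm_real,
          Real.norm_eq_abs, Real.norm_eq_abs, sq_abs, sq_abs, ← mul_assoc ((-Real.sin θ : ℝ) : ℂ),
          ← Complex.ofReal_mul]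
        rw [neg_sq]
        exact congrArg (fun z => _ + 2 * z + _) (Complex.re_ofReal_mul _ _)
      rw [e1, e2]
      have := Real.cos_sq_add_sin_sq θ
      linear_combination (‖g i‖ ^ 2 + ‖g j‖ ^ 2) * this
    have gi : (Function.update (Function.update g i p) j q) i = p := by simp [hij]
    have gj : (Function.update (Function.update g i p) j q) j = q := by simp
    have go : ∀ l, l ≠ i → l ≠ j → (Function.update (Function.update g i p) j q) l = g l := by
      intro l h1 h2; simp [h1, h2]
    refine ⟨Function.update (Function.update g i p) j q, ?_, ?_⟩
    · intro l
      by_cases hl : l = j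
      · subst hl
        rw [gj]
        simp only [tmove, if_true, hij.symm, if_false, sub_zero]
        rw [← hg l]
        rw [hg i] at hnorm
        linarith
      by_cases hl' : l = i
      · subst hl'
        rw [gi, hθ]
        simp [tmove, hij]
      · rw [go l hl' hl, hg]
        simp [tmove, hl, hl']
    · rw [← hgf]
      ext1 x
      rw [frameLin_apply, frameLin_apply, ← sub_eq_zero, ← Finset.sum_sub_distrib,
        Fintype.sum_eq_add i j hij]
      · rw [gi, gj]
        have := hrank x
        rw [sub_add_sub_comm, this, sub_self]
      · rintro l ⟨h1, h2⟩
        rw [go l h1 h2, sub_self]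
  · refine ⟨fun i => if h : (i : ℕ) < d then ((Real.sqrt (m ⟨i, h⟩) : ℝ) : ℂ) • u ⟨i, h⟩ else 0,
      fun i => ?_, ?_⟩
    · by_cases h : (i : ℕ) < d
      · simp [hM, h, norm_smul, Real.sq_sqrt (hm _)]
      · simp [hM, h]
    · ext1 x
      rw [frameLin_apply, diagOp_apply]
      refine hMsum _ _ (fun i => ?_) (fun i hi => ?_)
      · simp only [Fin.val_castLE, i.2, dif_pos]
        rw [inner_smul_left, smul_smul, Complex.conj_ofReal]
        congr 1
        rw [mul_right_comm, ← Complex.ofReal_mul, Real.mul_self_sqrt (hm _)]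
      · simp [not_lt.mpr hi]
  · intro r
    rw [hMp]
    rcases le_total r d with h | h
    · exact hps r h
    · rw [psum_full m r h, ← hs]
      unfold psum
      refine Finset.sum_le_sum fun i _ => ?_
      split_ifs
      · exact le_rfl
      · exact hnn i
  · rw [← psum_full M k le_rfl, hMp, psum_full m k hdk, hs]

end realize

section glue

variable {d : ℕ}

lemma eigs_unique {A : EE d →ₗ[ℂ] EE d} {u v : OrthonormalBasis (Fin d) ℂ (EE d)} {α β : Fin d → ℝ}
    (hA : IsEig A u α) (hB : IsEig A v β) (hα : Antitone α) (f : ℝ → ℝ) :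
    ∑ i, f (α i) = ∑ i, f (β i) := by
  obtain ⟨σ, hσ⟩ : ∃ σ : Equiv.Perm (Fin d), Antitone (β ∘ σ) := by
    refine ⟨Fin.revPerm.trans (Tuple.sort β), ?_⟩
    intro i j hij
    exact Tuple.monotone_sort β (Fin.rev_le_rev.mpr hij)
  have hB' : IsEig A (v.reindex σ.symm) (β ∘ σ) := by
    intro i; simp [hB (σ i)]
  have : α = β ∘ σ := by
    funext i
    exact le_antisymm (weyl hA hB' hα hσ (fun _ => le_rfl) i) (weyl hB' hA hσ hα (fun _ => le_rfl) i)
  rw [this]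
  exact Equiv.sum_comp σ (fun i => f (β i))

lemma frameOp_lin {n : ℕ} (G : Fin n → Fin d → ℂ) :
    Matrix.toEuclideanLin (frameOp G) = frameLin (fun i => WithLp.toLp 2 (G i)) := by
  ext1 x
  rw [frameLin_apply, frameOp, map_sum, LinearMap.sum_apply]
  refine Finset.sum_congr rfl fun i _ => ?_
  rw [Matrix.toLpLin_apply, Matrix.vecMulVec_mulVec]
  ext l
  simp [EuclideanSpace.inner_eq_star_dotProduct, dotProduct_comm, mul_comm]

lemma normSqVec_eq (g : Fin d → ℂ) : normSqVec g = ‖(WithLp.toLp 2 g : EE d)‖ ^ 2 := by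
  rw [EuclideanSpace.norm_sq_eq]
  simp [normSqVec, Complex.normSq_eq_norm_sq]

lemma frameOp_herm {n : ℕ} (G : Fin n → Fin d → ℂ) : (frameOp G).IsHermitian := by
  unfold frameOp Matrix.IsHermitian
  rw [Matrix.conjTranspose_sum]
  refine Finset.sum_congr rfl fun i _ => ?_
  ext a b
  simp [Matrix.vecMulVec, mul_comm]

lemma herm_isEig {S : Matrix (Fin d) (Fin d) ℂ} (hS : S.IsHermitian) :
    IsEig (Matrix.toEuclideanLin S) hS.eigenvectorBasis hS.eigenvalues := by
  intro i
  rw [Matrix.toLpLin_apply, hS.mulVec_eigenvectorBasis]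
  ext l
  simp

lemma eigsDesc_anti (S : Matrix (Fin d) (Fin d) ℂ) : Antitone (eigsDesc S) := by
  unfold eigsDesc
  split_ifs with h
  · intro i j hij
    exact Tuple.monotone_sort _ (Fin.rev_le_rev.mpr hij)
  · exact antitone_const

lemma eigsAsc_mono (S : Matrix (Fin d) (Fin d) ℂ) : Monotone (eigsAsc S) := by
  unfold eigsAsc
  split_ifs with h
  · exact Tuple.monotone_sort _
  · exact monotone_const

lemma eigsDesc_isEig {S : Matrix (Fin d) (Fin d) ℂ} (hS : S.IsHermitian) :
    ∃ u, IsEig (Matrix.toEuclideanLin S) u (eigsDesc S) := by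
  refine ⟨hS.eigenvectorBasis.reindex (Fin.revPerm.trans (Tuple.sort hS.eigenvalues)).symm, ?_⟩
  intro i
  have := herm_isEig hS (Tuple.sort hS.eigenvalues i.rev)
  simpa [eigsDesc, hS, sortDesc] using this

lemma eigsAsc_isEig {S : Matrix (Fin d) (Fin d) ℂ} (hS : S.IsHermitian) :
    ∃ u, IsEig (Matrix.toEuclideanLin S) u (eigsAsc S) := by
  refine ⟨hS.eigenvectorBasis.reindex (Tuple.sort hS.eigenvalues).symm, ?_⟩
  intro i
  have := herm_isEig hS (Tuple.sort hS.eigenvalues i)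
  simpa [eigsAsc, hS, sortAsc] using this

lemma isEig_nonneg {A : EE d →ₗ[ℂ] EE d} {u : OrthonormalBasis (Fin d) ℂ (EE d)} {α : Fin d → ℝ}
    (h : IsEig A u α) (hA : ∀ x, 0 ≤ (inner ℂ x (A x)).re) (i : Fin d) : 0 ≤ α i := by
  have := hA (u i)
  rw [h i, inner_smul_right, inner_self_eq_norm_sq_to_K] at this
  simpa using this

lemma frameLin_nonneg {k : ℕ} (g : Fin k → EE d) (x : EE d) :
    0 ≤ (inner ℂ x (frameLin g x)).re := by
  rw [frameLin_quad]; positivity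

end glue

section final

variable {d : ℕ}

lemma slack_false {n₀ k : ℕ} (hdk : d ≤ k)
    (F₀ : Fin n₀ → Fin d → ℂ) (a : Fin k → ℝ)
    (ha_pos : ∀ i, 0 < a i) (ha_mono : Antitone a)
    (f : ℝ → ℝ) (hf : StrictConvexOn ℝ (Set.Ici 0) f)
    (G : Fin k → Fin d → ℂ)
    (hmin : ∀ G' : Fin k → Fin d → ℂ, (∀ i, normSqVec (G' i) = a i) →
      potential f (frameOp F₀ + frameOp G) ≤ potential f (frameOp F₀ + frameOp G'))
    (lam μ : Fin d → ℝ) (hlam : lam = eigsAsc (frameOp F₀)) (hμ : μ = eigsDesc (frameOp G))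
    (hmaj : ∀ r, r ≤ d → psum a r ≤ psum μ r) (hsum : ∑ i, a i = ∑ i, μ i)
    (u v : Fin d) (huv : (v : ℕ) = u + 1) (hlt : lam v + μ v < lam u + μ u)
    (hslack : psum a v < psum μ v) : False := by
  have hlm : Monotone lam := hlam ▸ eigsAsc_mono _
  have hμa : Antitone μ := hμ ▸ eigsDesc_anti _
  have huv' : u ≠ v := by intro h; rw [h] at huv; omega
  have hlamuv : lam u ≤ lam v := hlm (by rw [Fin.le_def]; omega)
  obtain ⟨b0, hb0⟩ := eigsAsc_isEig (frameOp_herm F₀)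
  obtain ⟨b1, hb1⟩ := eigsDesc_isEig (frameOp_herm G)
  rw [← hlam] at hb0
  rw [← hμ] at hb1
  have hlam0 : ∀ i, 0 ≤ lam i := isEig_nonneg hb0 (by rw [frameOp_lin]; exact frameLin_nonneg _)
  have hμ0 : ∀ i, 0 ≤ μ i := isEig_nonneg hb1 (by rw [frameOp_lin]; exact frameLin_nonneg _)
  -- lower bound for the potential of the minimizer
  have hlow : ∑ i, f (lam i + μ i) ≤ potential f (frameOp F₀ + frameOp G) := by
    obtain ⟨w, hw⟩ := eigsDesc_isEig ((frameOp_herm F₀).add (frameOp_herm G))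
    have hw' := hw
    rw [map_add] at hw'
    refine hinge_karamata hf _ _ (eigsDesc_anti _) (isEig_nonneg hw' ?_) ?_ ?_
    · intro x
      rw [LinearMap.add_apply, inner_add_right, Complex.add_re, frameOp_lin, frameOp_lin]
      exact add_nonneg (frameLin_nonneg _ _) (frameLin_nonneg _ _)
    · exact lidskii hb0 hb1 hw' hlm hμa
    · have := hw'.trace
      rw [map_add, hb0.trace, hb1.trace] at this
      rw [Finset.sum_add_distrib]
      exact_mod_cast this
  set ε := min (psum μ v - psum a v)
    (min ((μ u - μ v) / 2) ((lam u + μ u - (lam v + μ v)) / 2)) with hε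
  have hε0 : 0 < ε := lt_min (by linarith) (lt_min (by linarith) (by linarith))
  have hε1 : ε ≤ psum μ v - psum a v := min_le_left _ _
  have hε2 : ε ≤ (μ u - μ v) / 2 := (min_le_right _ _).trans (min_le_left _ _)
  have hε3 : ε ≤ (lam u + μ u - (lam v + μ v)) / 2 := (min_le_right _ _).trans (min_le_right _ _)
  have hμ'0 : ∀ i, 0 ≤ tmove μ u v ε i := by
    intro i
    have := hμ0 v
    have := hμ0 i
    unfold tmove
    split_ifs with h1 h2 h2
    · linarith
    · linarith
    · subst h2; linarith
    · linarith
  obtain ⟨g, hg1, hg2⟩ := realize hdk b0 (tmove μ u v ε) hμ'0 a ha_mono (by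
      intro r hr
      rw [psum_tmove]
      have := hmaj r hr
      rcases lt_trichotomy r (v : ℕ) with h | h | h
      · rw [if_neg (by omega), if_neg (by omega)]; linarith
      · rw [if_neg (by omega), if_pos (by omega), h]; linarith
      · rw [if_pos (by omega), if_pos (by omega)]; linarith) (fun i => (ha_pos i).le) (by
      rw [← psum_full (tmove μ u v ε) d le_rfl, psum_tmove, psum_full _ _ le_rfl, hsum]
      simp)
  have h1 := hmin (fun i => WithLp.ofLp (g i)) (fun i => by rw [normSqVec_eq]; exact hg1 i)
  have hG' : Matrix.toEuclideanLin (frameOp fun i => WithLp.ofLp (g i)) = frameLin g :=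
    frameOp_lin _
  have hpot : potential f (frameOp F₀ + frameOp fun i => WithLp.ofLp (g i)) =
      ∑ i, f (lam i + tmove μ u v ε i) := by
    obtain ⟨w, hw⟩ := eigsDesc_isEig ((frameOp_herm F₀).add (frameOp_herm fun i => WithLp.ofLp (g i)))
    refine eigs_unique hw (v := b0) (β := fun i => lam i + tmove μ u v ε i) ?_ (eigsDesc_anti _) f
    intro i
    rw [map_add, hG', LinearMap.add_apply, hb0 i, hg2 i, ← add_smul, Complex.ofReal_add]
  have h2 := sum_tmove (fun l z => f (lam l + z)) μ u v huv' ε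
  have h3 := convex_move hf (p := lam u + μ u) (q := lam v + μ v) (δ := ε)
    (add_nonneg (hlam0 v) (hμ0 v)) hε0 (by linarith)
  rw [add_sub_assoc, add_assoc (lam v)] at h3
  rw [hpot] at h1
  linarith

lemma window {m : ℕ} (x : Fin m → ℝ) (lo hi : ℕ) (h : lo ≤ hi) :
    (∑ i : Fin m, if lo ≤ (i : ℕ) ∧ (i : ℕ) < hi then x i else 0) = psum x hi - psum x lo := by
  unfold psum
  rw [← Finset.sum_sub_distrib]
  refine Finset.sum_congr rfl fun i _ => ?_
  by_cases h1 : (i : ℕ) < lo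
  · simp [h1, lt_of_lt_of_le h1 h, not_le.mpr h1]
  · by_cases h2 : (i : ℕ) < hi
    · simp [h1, h2, not_lt.mp h1]
    · simp [h1, h2]

lemma psum_const {m : ℕ} (c : ℝ) (r : ℕ) (hr : r ≤ m) : psum (fun _ : Fin m => c) r = r * c := by
  have := window (m := m) (fun _ => c) 0 r (Nat.zero_le _)
  unfold psum
  rw [← Finset.sum_filter, Finset.sum_const, nsmul_eq_mul]
  congr 2
  rw [Fin.card_filter_val_lt]
  exact min_eq_right hr

lemma psum_add {m : ℕ} (x y : Fin m → ℝ) (r : ℕ) :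
    psum (fun i => x i + y i) r = psum x r + psum y r := by
  unfold psum
  rw [← Finset.sum_add_distrib]
  refine Finset.sum_congr rfl fun i _ => ?_
  split_ifs <;> simp

end final

theorem stmt_13 {d n₀ k : ℕ} (hdk : d ≤ k)
    (F₀ : Fin n₀ → Fin d → ℂ) (a : Fin k → ℝ)
    (ha_pos : ∀ i, 0 < a i) (ha_mono : Antitone a)
    (f : ℝ → ℝ) (hf : StrictConvexOn ℝ (Set.Ici 0) f) (hf0 : ∀ x ∈ Set.Ici (0 : ℝ), 0 ≤ f x)
    (G : Fin k → Fin d → ℂ) (hG : ∀ i, normSqVec (G i) = a i)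
    (hmin : ∀ G' : Fin k → Fin d → ℂ, (∀ i, normSqVec (G' i) = a i) →
      potential f (frameOp F₀ + frameOp G) ≤ potential f (frameOp F₀ + frameOp G'))
    (lam μ : Fin d → ℝ) (hlam : lam = eigsAsc (frameOp F₀)) (hμ : μ = eigsDesc (frameOp G))
    (sF : ℕ) (hsF : sF = (frameOp G).rank)
    (p : ℕ) (hp1 : 1 < p) (c : Fin p → ℝ) (hcanti : StrictAnti c) (hcpos : ∀ j, 0 < c j)
    (s : Fin (p + 1) → ℕ) (hs0 : s 0 = 0) (hsm : StrictMono s) (hsl : s (Fin.last p) = sF)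
    (hblock : ∀ j : Fin p, ∀ i : Fin d,
      s j.castSucc ≤ (i : ℕ) → (i : ℕ) < s j.succ → lam i + μ i = c j)
    (htail : ∀ i : Fin d, sF ≤ (i : ℕ) → μ i = 0) :
    ∀ (j : ℕ) (hj : j + 1 < p),
      IsGreatest {r : ℕ | s ⟨j, by omega⟩ < r ∧ r ≤ s ⟨p - 1, by omega⟩ ∧
          ∀ i, s ⟨j, by omega⟩ < i → i ≤ s ⟨p - 1, by omega⟩ →
            initAvg lam a (s ⟨j, by omega⟩) i ≤ initAvg lam a (s ⟨j, by omega⟩) r}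
        (s ⟨j + 1, by omega⟩) ∧
      c ⟨j, by omega⟩ = initAvg lam a (s ⟨j, by omega⟩) (s ⟨j + 1, by omega⟩) := by
  have hrank : sF ≤ d := by
    rw [hsF]; exact (Matrix.rank_le_card_height _).trans (by simp)
  have hsle : ∀ j, s j ≤ d := fun j => by
    have := hsm.monotone (Fin.le_last j); omega
  have hμa : Antitone μ := hμ ▸ eigsDesc_anti _
  obtain ⟨b1, hb1⟩ := eigsDesc_isEig (frameOp_herm G)
  rw [← hμ, frameOp_lin] at hb1
  have hnorm : ∀ i, ‖(WithLp.toLp 2 (G i) : EE d)‖ ^ 2 = a i := fun i => by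
    rw [← normSqVec_eq, hG]
  have hmaj : ∀ r, r ≤ d → psum a r ≤ psum μ r := by
    intro r hr
    have := kyfan hdk _ hb1 hμa r hr
    simp only [hnorm] at this
    exact this
  have hsum : ∑ i, a i = ∑ i, μ i := by
    have := hb1.trace
    rw [frameLin_trace] at this
    simp only [hnorm] at this
    exact_mod_cast this
  have heq : ∀ (j : ℕ) (hj : j < p), psum a (s ⟨j, by omega⟩) = psum μ (s ⟨j, by omega⟩) := by
    intro j hj
    rcases Nat.eq_zero_or_pos j with rfl | hj0
    · have : s ⟨0, by omega⟩ = 0 := hs0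
      rw [this]; simp [psum]
    refine le_antisymm (hmaj _ (hsle _)) (not_lt.mp fun hlt => ?_)
    have e0 : s ⟨j - 1, by omega⟩ < s ⟨j, by omega⟩ := hsm (by rw [Fin.lt_def]; simp; omega)
    have e1 : s ⟨j, by omega⟩ < s ⟨j + 1, by omega⟩ := hsm (by rw [Fin.lt_def]; simp)
    have e2 := hsle ⟨j + 1, by omega⟩
    refine slack_false hdk F₀ a ha_pos ha_mono f hf G hmin lam μ hlam hμ hmaj hsum
      ⟨s ⟨j, by omega⟩ - 1, by omega⟩ ⟨s ⟨j, by omega⟩, by omega⟩ (by simp; omega) ?_ hlt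
    rw [hblock ⟨j, hj⟩ ⟨s ⟨j, by omega⟩, by omega⟩ (le_refl (s ⟨j, _⟩)) e1,
      hblock ⟨j - 1, by omega⟩ ⟨s ⟨j, by omega⟩ - 1, by omega⟩ (Nat.le_sub_one_of_lt e0) (by
        have : (⟨j - 1, by omega⟩ : Fin p).succ = ⟨j, by omega⟩ := by
          ext; simp; omega
        rw [this]; exact Nat.sub_lt (by omega) one_pos)]
    exact hcanti (by rw [Fin.lt_def]; simp; omega)
  have hloc : ∀ q : ℕ, ∀ hq : q ≤ p, ∀ n, n < s ⟨q, by omega⟩ →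
      ∃ l : Fin p, s l.castSucc ≤ n ∧ n < s l.succ := by
    intro q
    induction q with
    | zero =>
      intro hq n hn
      have : s ⟨0, by omega⟩ = 0 := hs0
      omega
    | succ q ih =>
      intro hq n hn
      by_cases h : n < s ⟨q, by omega⟩
      · exact ih (by omega) n h
      · exact ⟨⟨q, by omega⟩, not_lt.mp h, hn⟩
  intro j hj
  set A := s ⟨j, by omega⟩ with hA
  set B := s ⟨j + 1, by omega⟩ with hB
  set T := s ⟨p - 1, by omega⟩ with hT
  set C := c ⟨j, by omega⟩ with hC
  have hAB : A < B := hsm (by rw [Fin.lt_def]; simp)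
  have hBT : B ≤ T := hsm.monotone (by rw [Fin.le_def]; simp; omega)
  have hTd : T ≤ d := hsle _
  have hTl : T ≤ s ⟨p, by omega⟩ := hsm.monotone (by rw [Fin.le_def]; simp)
  have hxle : ∀ i : Fin d, A ≤ i → (i : ℕ) < T → lam i + μ i ≤ C := by
    intro i h1 h2
    obtain ⟨l, l1, l2⟩ := hloc p le_rfl i (by omega)
    rw [hblock l i l1 l2]
    have : (⟨j, by omega⟩ : Fin (p + 1)) < l.succ := hsm.lt_iff_lt.mp (lt_of_le_of_lt h1 l2)
    refine hcanti.antitone ?_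
    rw [Fin.lt_def] at this
    rw [Fin.le_def]
    simp at this ⊢
    omega
  have hxlt : ∀ i : Fin d, B ≤ i → (i : ℕ) < T → lam i + μ i < C := by
    intro i h1 h2
    obtain ⟨l, l1, l2⟩ := hloc p le_rfl i (by omega)
    rw [hblock l i l1 l2]
    have : (⟨j + 1, by omega⟩ : Fin (p + 1)) < l.succ := hsm.lt_iff_lt.mp (lt_of_le_of_lt h1 l2)
    refine hcanti ?_
    rw [Fin.lt_def] at this
    rw [Fin.lt_def]
    simp at this ⊢
    omega
  have hxeq : ∀ i : Fin d, A ≤ i → (i : ℕ) < B → lam i + μ i = C := by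
    intro i h1 h2
    exact hblock ⟨j, by omega⟩ i h1 h2
  have eA : psum a A = psum μ A := heq j (by omega)
  have eB : psum a B = psum μ B := heq (j + 1) hj
  have havg : ∀ i, A < i → initAvg lam a A i =
      (psum lam i - psum lam A + (psum a i - psum a A)) / ((i : ℝ) - A) := by
    intro i hi
    unfold initAvg
    rw [window _ _ _ hi.le, window _ _ _ hi.le]
  have hcw : ∀ i, A ≤ i → i ≤ d → ((i : ℝ) - A) * C =
      ∑ l : Fin d, if A ≤ (l : ℕ) ∧ (l : ℕ) < i then C else 0 := by
    intro i hi hid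
    rw [window (fun _ => C) _ _ hi, psum_const _ _ hid, psum_const _ _ (by omega)]
    ring
  have hxw : ∀ i, A ≤ i → psum lam i + psum μ i - (psum lam A + psum μ A) =
      ∑ l : Fin d, if A ≤ (l : ℕ) ∧ (l : ℕ) < i then lam l + μ l else 0 := by
    intro i hi
    rw [window (fun l => lam l + μ l) _ _ hi, psum_add, psum_add]
  have hpos : ∀ i : ℕ, A < i → 0 < (i : ℝ) - A := by
    intro i hi
    have : (A : ℝ) < i := by exact_mod_cast hi
    linarith
  have hle : ∀ i, A < i → i ≤ T → initAvg lam a A i ≤ C := by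
    intro i h1 h2
    rw [havg i h1, div_le_iff₀ (hpos i h1), mul_comm, hcw i h1.le (by omega)]
    have := hmaj i (by omega)
    have k1 := hxw i h1.le
    have k2 : (∑ l : Fin d, if A ≤ (l : ℕ) ∧ (l : ℕ) < i then lam l + μ l else 0) ≤
      ∑ l : Fin d, if A ≤ (l : ℕ) ∧ (l : ℕ) < i then C else 0 := by
      refine Finset.sum_le_sum fun l _ => ?_
      split_ifs with h
      · exact hxle l h.1 (by omega)
      · exact le_rfl
    linarith
  have hlt : ∀ i, B < i → i ≤ T → initAvg lam a A i < C := by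
    intro i h1 h2
    have h1' : A < i := by omega
    rw [havg i h1', div_lt_iff₀ (hpos i h1'), mul_comm, hcw i h1'.le (by omega)]
    have := hmaj i (by omega)
    have k1 := hxw i h1'.le
    have k2 : (∑ l : Fin d, if A ≤ (l : ℕ) ∧ (l : ℕ) < i then lam l + μ l else 0) <
      ∑ l : Fin d, if A ≤ (l : ℕ) ∧ (l : ℕ) < i then C else 0 := by
      refine Finset.sum_lt_sum (fun l _ => ?_) ⟨⟨B, by omega⟩, mem_univ _, ?_⟩
      · split_ifs with h
        · exact hxle l h.1 (by omega)
        · exact le_rfl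
      · rw [if_pos ⟨hAB.le, h1⟩, if_pos ⟨hAB.le, h1⟩]
        exact hxlt _ le_rfl (lt_of_lt_of_le h1 h2)
    linarith
  have hCB : C = initAvg lam a A B := by
    rw [havg B hAB, eq_div_iff (hpos B hAB).ne', mul_comm, hcw B hAB.le (by omega)]
    have k1 := hxw B hAB.le
    have k2 : (∑ l : Fin d, if A ≤ (l : ℕ) ∧ (l : ℕ) < B then lam l + μ l else 0) =
      ∑ l : Fin d, if A ≤ (l : ℕ) ∧ (l : ℕ) < B then C else 0 := by
      refine Finset.sum_congr rfl fun l _ => ?_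
      split_ifs with h
      · exact hxeq l h.1 h.2
      · rfl
    linarith
  refine ⟨⟨⟨hAB, hBT, fun i h1 h2 => hCB ▸ hle i h1 h2⟩, ?_⟩, hCB⟩
  rintro r ⟨h1, h2, h3⟩
  by_contra hcon
  have q1 := hlt r (not_le.mp hcon) h2
  have q2 := h3 B hAB hBT
  rw [← hCB] at q2
  linarith
end

section
/- Let (F_0, a) be initial data for the completion problem in ℂ^d with k ≥ d, let f : [0,∞) → [0,∞) be strictly convex, and let F = (F_0, G) ∈ C_a(F_0) be a global minimizer of P_f on C_a(F_0), with associated data λ = λ↑(S_0), μ = λ(S_G), s_F, constants c_1 > … > c_p > 0, and sets K_1,…,K_p, and suppose p > 1. Then for every i ∈ K_1 and every j ∈ K_r with r ≥ 2 one has i < j; moreover, each set K_j consists of consecutive indices and K_1 < K_2 < … < K_p (i.e., every element of K_i is smaller than every element of K_j whenever i < j). -/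
open Finset
open scoped ComplexOrder

lemma rot_exists (b₁ b₂ e : ℝ) (h2 : 0 < b₂) (h12 : b₂ ≤ b₁) (he : 0 < e) (he2 : e ≤ b₂) :
    ∃ A B E F : ℝ, A ^ 2 + E ^ 2 = 1 ∧ B ^ 2 + F ^ 2 = 1 ∧ A ^ 2 * b₁ + B ^ 2 * b₂ = b₁ + e ∧
      E ^ 2 * b₁ + F ^ 2 * b₂ = b₂ - e ∧ A * E * b₁ + B * F * b₂ = 0 := by
  have h1 : 0 < b₁ := by linarith
  have hD : 0 < b₁ - b₂ + 2 * e := by linarith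
  set t := (b₁ - b₂ + e) / (b₁ - b₂ + 2 * e) with ht
  set u := e / (b₁ - b₂ + 2 * e) with hu
  have ht0 : 0 ≤ t := by apply div_nonneg <;> linarith
  have hu0 : 0 ≤ u := by apply div_nonneg <;> linarith
  have htu : t + u = 1 := by
    rw [ht, hu]; generalize hz : b₁ - b₂ + 2 * e = z at *
    have hb : b₁ = z + b₂ - 2 * e := by linarith
    field_simp; rw [hb]; ring
  have hkey : t * (b₁ + e) + u * (b₂ - e) = b₁ := by
    rw [ht, hu]; generalize hz : b₁ - b₂ + 2 * e = z at *
    have hb : b₁ = z + b₂ - 2 * e := by linarith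
    field_simp; rw [hb]; ring
  have hC := Real.sq_sqrt ht0
  have hS := Real.sq_sqrt hu0
  have hp := Real.sq_sqrt (show 0 ≤ b₁ + e by linarith)
  have hq := Real.sq_sqrt (show 0 ≤ b₂ - e by linarith)
  have hx := Real.sq_sqrt h1.le
  have hy := Real.sq_sqrt h2.le
  have hx0 := Real.sqrt_pos.2 h1
  have hy0 := Real.sqrt_pos.2 h2
  set C := √t
  set S := √u
  set P := √(b₁ + e)
  set Q := √(b₂ - e)
  set X := √b₁
  set Y := √b₂
  refine ⟨P * C / X, P * S / Y, -(Q * S / X), Q * C / Y, ?_, ?_, ?_, ?_, ?_⟩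
  · have : (P * C / X) ^ 2 + (-(Q * S / X)) ^ 2 = (P^2 * C^2 + Q^2 * S^2) / X^2 := by
      field_simp
    rw [this, hp, hC, hq, hS, hx, div_eq_one_iff_eq h1.ne']; linarith
  · have : (P * S / Y) ^ 2 + (Q * C / Y) ^ 2 = (P^2 * S^2 + Q^2 * C^2) / Y^2 := by
      field_simp
    rw [this, hp, hC, hq, hS, hy, div_eq_one_iff_eq h2.ne']
    have : u = 1 - t := by linarith
    rw [this] at hkey ⊢; nlinarith
  · rw [← hx, ← hy]
    have : (P * C / X) ^ 2 * X^2 + (P * S / Y) ^ 2 * Y^2 = P^2 * (C^2 + S^2) := by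
      field_simp
    rw [this, hp, hC, hS, htu, hx]; ring
  · rw [← hx, ← hy]
    have : (-(Q * S / X)) ^ 2 * X^2 + (Q * C / Y) ^ 2 * Y^2 = Q^2 * (C^2 + S^2) := by
      field_simp; ring
    rw [this, hq, hC, hS, htu, hy]; ring
  · rw [← hx, ← hy]; field_simp; ring

lemma frameOp_eq {d n : ℕ} (F : Fin n → Fin d → ℂ) :
    frameOp F = (Matrix.of F).transpose * (Matrix.of F).transpose.conjTranspose := by
  ext p q
  simp [frameOp, Matrix.mul_apply, Matrix.sum_apply, Matrix.vecMulVec_apply]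

lemma frameOp_psd {d n : ℕ} (F : Fin n → Fin d → ℂ) : (frameOp F).PosSemidef := by
  rw [frameOp_eq]; exact Matrix.posSemidef_self_mul_conjTranspose _

lemma perm_of_multiset {d : ℕ} (f g : Fin d → ℝ)
    (h : Multiset.map f univ.val = Multiset.map g univ.val) :
    ∃ σ : Equiv.Perm (Fin d), f ∘ σ = g := by
  rw [Fin.univ_val_map, Fin.univ_val_map, Multiset.coe_eq_coe] at h
  have h1 : (List.ofFn (f ∘ Tuple.sort f)).Perm (List.ofFn (g ∘ Tuple.sort g)) :=
    ((Equiv.Perm.ofFn_comp_perm _ f).trans h).trans (Equiv.Perm.ofFn_comp_perm _ g).symm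
  have h2 : f ∘ Tuple.sort f = g ∘ Tuple.sort g := List.ofFn_injective
    (h1.eq_of_sortedLE (Tuple.monotone_sort f).sortedLE_ofFn (Tuple.monotone_sort g).sortedLE_ofFn)
  refine ⟨(Tuple.sort g).symm.trans (Tuple.sort f), ?_⟩
  ext i
  have := congrFun h2 ((Tuple.sort g).symm i)
  simpa using this

lemma eigs_perm {d : ℕ} (S U : Matrix (Fin d) (Fin d) ℂ) (hU : U.conjTranspose * U = 1)
    (r : Fin d → ℝ) (hS : S = U * Matrix.diagonal (fun m => (r m : ℂ)) * U.conjTranspose)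
    (h : S.IsHermitian) : ∃ σ : Equiv.Perm (Fin d), h.eigenvalues ∘ σ = r := by
  have hc : S.charpoly = (Matrix.diagonal (fun m => (r m : ℂ))).charpoly := by
    rw [hS, Matrix.mul_assoc, Matrix.charpoly_mul_comm, Matrix.mul_assoc, hU, Matrix.mul_one]
  have h1 : S.charpoly.roots = Multiset.map (fun m => (r m : ℂ)) univ.val := by
    rw [hc, Matrix.charpoly_diagonal]
    rw [Polynomial.roots_prod _ _ (Finset.prod_ne_zero_iff.2 fun i _ => Polynomial.X_sub_C_ne_zero _)]
    simp
  rw [h.roots_charpoly_eq_eigenvalues] at h1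
  have h2 : Multiset.map h.eigenvalues univ.val = Multiset.map r univ.val := by
    have := congrArg (Multiset.map Complex.re) h1
    simpa [Multiset.map_map, Function.comp_def] using this
  exact perm_of_multiset _ _ h2

lemma sum_sortDesc {d : ℕ} (f : ℝ → ℝ) (x : Fin d → ℝ) :
    ∑ i, f (sortDesc x i) = ∑ i, f (x i) := by
  have h1 := Equiv.sum_comp Fin.revPerm (fun i => f ((x ∘ Tuple.sort x) i))
  have h2 := Equiv.sum_comp (Tuple.sort x) (fun i => f (x i))
  simp only [Fin.revPerm_apply] at h1
  exact h1.trans h2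

lemma potential_diag {d : ℕ} (f : ℝ → ℝ) (S U : Matrix (Fin d) (Fin d) ℂ)
    (hU : U.conjTranspose * U = 1)
    (r : Fin d → ℝ) (hS : S = U * Matrix.diagonal (fun m => (r m : ℂ)) * U.conjTranspose) :
    potential f S = ∑ m, f (r m) := by
  have h : S.IsHermitian := by
    rw [hS]
    apply Matrix.isHermitian_mul_mul_conjTranspose
    rw [Matrix.isHermitian_diagonal_iff]
    intro i; simp [isSelfAdjoint_iff]
  obtain ⟨σ, hσ⟩ := eigs_perm S U hU r hS h
  rw [potential, eigsDesc, dif_pos h, ← hσ]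
  rw [sum_sortDesc]
  simp only [Function.comp]
  rw [Equiv.sum_comp _ (fun i => f (h.eigenvalues i))]

lemma key {d k : ℕ} (S₀ : Matrix (Fin d) (Fin d) ℂ) (a : Fin k → ℝ)
    (f : ℝ → ℝ) (hf : StrictConvexOn ℝ (Set.Ici 0) f)
    (G : Fin k → Fin d → ℂ) (hG : ∀ i, normSqVec (G i) = a i)
    (hmin : ∀ G' : Fin k → Fin d → ℂ, (∀ i, normSqVec (G' i) = a i) →
      potential f (S₀ + frameOp G) ≤ potential f (S₀ + frameOp G'))
    (hJ : ∀ l : Fin k, ∃ c : ℝ, (S₀ + frameOp G).mulVec (G l) = (c : ℂ) • G l)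
    (U : Matrix (Fin d) (Fin d) ℂ) (hU : U.conjTranspose * U = 1)
    (hU' : U * U.conjTranspose = 1) (α β : Fin d → ℝ)
    (hS₀ : S₀ = U * Matrix.diagonal (fun m => (α m : ℂ)) * U.conjTranspose)
    (hSG : frameOp G = U * Matrix.diagonal (fun m => (β m : ℂ)) * U.conjTranspose)
    (hα : ∀ m, 0 ≤ α m) (hβ : ∀ m, 0 ≤ β m) (m n : Fin d) (hn : 0 < β n) (hmn : β n ≤ β m) :
    ¬ (α m + β m < α n + β n) := by
  intro hlt
  have hne : m ≠ n := by rintro rfl; exact lt_irrefl _ hlt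
  set e := min (β n) ((α n + β n - (α m + β m)) / 2) with he
  have he0 : 0 < e := lt_min hn (by linarith)
  have he1 : e ≤ β n := min_le_left _ _
  have he2 : e ≤ (α n + β n - (α m + β m)) / 2 := min_le_right _ _
  obtain ⟨A, B, E, F, h1, h2, h3, h4, h5⟩ := rot_exists (β m) (β n) e hn hmn he0 he1
  set H : Matrix (Fin d) (Fin k) ℂ := U.conjTranspose * (Matrix.of G).transpose with hH
  have hUH : U * H = (Matrix.of G).transpose := by rw [hH, ← Matrix.mul_assoc, hU', Matrix.one_mul]
  have hHH : H * H.conjTranspose = Matrix.diagonal (fun m => (β m : ℂ)) := by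
    have := hSG
    rw [frameOp_eq] at this
    rw [hH, Matrix.conjTranspose_mul, Matrix.conjTranspose_conjTranspose, Matrix.mul_assoc,
      ← Matrix.mul_assoc _ _ U, this]
    simp only [Matrix.mul_assoc, hU, Matrix.mul_one]
    rw [← Matrix.mul_assoc, hU, Matrix.one_mul]
  have hK : ∀ p q, ∑ l, H p l * star (H q l) = if p = q then (β p : ℂ) else 0 := by
    intro p q
    have := congrFun (congrFun hHH p) q
    simpa [Matrix.mul_apply, Matrix.diagonal_apply] using this
  have hdis : ∀ l, H m l * H n l = 0 := by
    intro l
    obtain ⟨c, hc⟩ := hJ l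
    have hs : S₀ + frameOp G = U * Matrix.diagonal (fun m => ((α m + β m : ℝ) : ℂ)) * U.conjTranspose := by
      rw [hS₀, hSG, ← Matrix.add_mul, ← Matrix.mul_add, Matrix.diagonal_add]; simp
    have hHl : ∀ p, H p l = U.conjTranspose.mulVec (G l) p := by
      intro p; rw [hH]; simp [Matrix.mul_apply, Matrix.mulVec, dotProduct]
    have hc2 := congrArg (U.conjTranspose.mulVec) hc
    rw [hs, Matrix.mulVec_mulVec, Matrix.mul_assoc, ← Matrix.mul_assoc _ U, hU, Matrix.one_mul,
      ← Matrix.mulVec_mulVec, Matrix.mulVec_smul] at hc2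
    have hp : ∀ p, ((α p + β p : ℝ) : ℂ) * H p l = c * H p l := by
      intro p
      have := congrFun hc2 p
      rw [Matrix.mulVec_diagonal, Pi.smul_apply, ← hHl] at this
      exact this
    by_contra hz
    have hm0 := left_ne_zero_of_mul hz
    have hn0 := right_ne_zero_of_mul hz
    have e1 := mul_right_cancel₀ hm0 (hp m)
    have e2 := mul_right_cancel₀ hn0 (hp n)
    have := Complex.ofReal_injective (e1.trans e2.symm)
    linarith
  set P : Fin d → ℝ := fun p => if p = m then A else if p = n then F else 1 with hP
  set Q : Fin d → ℝ := fun p => if p = m then B else if p = n then E else 0 with hQ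
  set sw := Equiv.swap m n with hsw
  set H' : Matrix (Fin d) (Fin k) ℂ := Matrix.of fun p l => P p * H p l + Q p * H (sw p) l with hH'
  set β' : Fin d → ℝ := fun p => if p = m then β m + e else if p = n then β n - e else β p with hβ'
  have hPm : P m = A := by simp [hP]
  have hPn : P n = F := by simp [hP, hne.symm]
  have hQm : Q m = B := by simp [hQ]
  have hQn : Q n = E := by simp [hQ, hne.symm]
  have hsm : sw m = n := by simp [hsw]
  have hsn : sw n = m := by simp [hsw]
  have hbm : β' m = β m + e := by simp [hβ']
  have hbn : β' n = β n - e := by simp [hβ', hne.symm]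
  have hK' : ∀ p q, ∑ l, H' p l * star (H' q l) = if p = q then (β' p : ℂ) else 0 := by
    intro p q
    have : ∑ l, H' p l * star (H' q l) = P p * P q * (∑ l, H p l * star (H q l))
       + P p * Q q * (∑ l, H p l * star (H (sw q) l)) + Q p * P q * (∑ l, H (sw p) l * star (H q l))
       + Q p * Q q * (∑ l, H (sw p) l * star (H (sw q) l)) := by
      simp only [Finset.mul_sum, ← Finset.sum_add_distrib]
      refine Finset.sum_congr rfl fun l _ => ?_
      simp [hH']
      ring
    rw [this]
    simp only [hK]
    have g3 : (A:ℂ) ^ 2 * β m + B ^ 2 * β n = β m + e := by exact_mod_cast h3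
    have g4 : (E:ℂ) ^ 2 * β m + F ^ 2 * β n = β n - e := by exact_mod_cast h4
    have g5 : (A:ℂ) * E * β m + B * F * β n = 0 := by exact_mod_cast h5
    by_cases hpm : p = m
    · subst hpm
      by_cases hqm : q = p
      · subst hqm
        simp [hPm, hQm, hsm, hne, hne.symm, hbm, ← g3]; ring
      by_cases hqn : q = n
      · subst hqn
        simp [hPm, hQm, hsm, hsn, hPn, hQn, hne, hne.symm]; linear_combination g5
      · have s1 : sw q = q := Equiv.swap_apply_of_ne_of_ne hqm hqn
        simp [s1, hsm, Ne.symm hqm, Ne.symm hqn]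
    by_cases hpn : p = n
    · subst hpn
      by_cases hqm : q = m
      · subst hqm
        simp [hPm, hQm, hsm, hsn, hPn, hQn, hne, hne.symm]; linear_combination g5
      by_cases hqn : q = p
      · subst hqn
        simp [hPm, hQm, hsm, hsn, hPn, hQn, hne, hne.symm, hbn, ← g4]; ring
      · have s1 : sw q = q := Equiv.swap_apply_of_ne_of_ne hqm hqn
        simp [s1, hsn, Ne.symm hqm, Ne.symm hqn]
    · have s1 : sw p = p := Equiv.swap_apply_of_ne_of_ne hpm hpn
      have s2 : Q p = 0 := by simp [hQ, hpm, hpn]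
      have s3 : P p = 1 := by simp [hP, hpm, hpn]
      have s4 : β' p = β p := by simp [hβ', hpm, hpn]
      by_cases hqm : q = m
      · subst hqm; simp [s2, hpm, hpn, hsm]
      by_cases hqn : q = n
      · subst hqn; simp [s2, hpm, hpn, hsn]
      · have t2 : Q q = 0 := by simp [hQ, hqm, hqn]
        have t3 : P q = 1 := by simp [hP, hqm, hqn]
        simp [s2, s3, s4, t2, t3]
  have hPQ : ∀ p, P p ^ 2 + Q (sw p) ^ 2 = 1 := by
    intro p
    by_cases hpm : p = m
    · subst hpm; rw [hPm, hsm, hQn, h1]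
    by_cases hpn : p = n
    · subst hpn; rw [hPn, hsn, hQm]; linarith
    · have s1 : sw p = p := Equiv.swap_apply_of_ne_of_ne hpm hpn
      simp [s1, hP, hQ, hpm, hpn]
  have hcol : ∀ l, ∑ p, Complex.normSq (H' p l) = ∑ p, Complex.normSq (H p l) := by
    intro l
    have e1 : ∀ p, Complex.normSq (H' p l) = P p ^ 2 * Complex.normSq (H p l)
        + Q p ^ 2 * Complex.normSq (H (sw p) l) := by
      intro p
      have : Q p = 0 ∨ H p l = 0 ∨ H (sw p) l = 0 := by
        by_cases hpm : p = m
        · subst hpm; rw [hsm]; right; exact mul_eq_zero.1 (hdis l)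
        by_cases hpn : p = n
        · subst hpn; rw [hsn]; right; exact (mul_eq_zero.1 (hdis l)).symm
        · left; simp [hQ, hpm, hpn]
      rcases this with h | h | h <;> simp [hH', h, Complex.normSq_mul, Complex.normSq_ofReal, sq]
    simp only [e1, Finset.sum_add_distrib]
    have e2 : ∑ p, Q p ^ 2 * Complex.normSq (H (sw p) l) = ∑ p, Q (sw p) ^ 2 * Complex.normSq (H p l) := by
      rw [← Equiv.sum_comp sw]
      simp [hsw]
    rw [e2, ← Finset.sum_add_distrib]
    refine Finset.sum_congr rfl fun p _ => ?_
    rw [← add_mul, hPQ, one_mul]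
  set G' : Fin k → Fin d → ℂ := fun l p => (U * H') p l with hG'
  have hG't : (Matrix.of G').transpose = U * H' := by ext p l; simp [hG']
  have hns : ∀ (M : Matrix (Fin d) (Fin k) ℂ) l, ((∑ p, Complex.normSq (M p l) : ℝ) : ℂ)
      = (M.conjTranspose * M) l l := by
    intro M l
    simp [Matrix.mul_apply, Complex.normSq_eq_conj_mul_self]
  have hUM : ∀ (M : Matrix (Fin d) (Fin k) ℂ), (U * M).conjTranspose * (U * M) = M.conjTranspose * M := by
    intro M
    rw [Matrix.conjTranspose_mul, Matrix.mul_assoc, ← Matrix.mul_assoc _ U, hU, Matrix.one_mul]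
  have hGn : ∀ i, normSqVec (G' i) = a i := by
    intro i
    rw [← hG i]
    have e1 : normSqVec (G' i) = ∑ p, Complex.normSq ((U * H') p i) := rfl
    have e2 : normSqVec (G i) = ∑ p, Complex.normSq ((U * H) p i) := by rw [hUH]; rfl
    rw [e1, e2]
    apply Complex.ofReal_injective
    rw [hns, hns, hUM, hUM, ← hns, ← hns, hcol]
  have hfG' : frameOp G' = U * Matrix.diagonal (fun m => (β' m : ℂ)) * U.conjTranspose := by
    rw [frameOp_eq, hG't, Matrix.conjTranspose_mul, Matrix.mul_assoc, ← Matrix.mul_assoc H',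
      ← Matrix.mul_assoc]
    congr 2
    ext p q
    rw [Matrix.diagonal_apply, ← hK' p q]
    simp [Matrix.mul_apply]
  have hm := hmin G' hGn
  rw [potential_diag f _ U hU (fun p => α p + β p), potential_diag f _ U hU (fun p => α p + β' p)] at hm
  rotate_left
  · rw [hS₀, hfG', ← Matrix.add_mul, ← Matrix.mul_add, Matrix.diagonal_add]; simp
  · rw [hS₀, hSG, ← Matrix.add_mul, ← Matrix.mul_add, Matrix.diagonal_add]; simp
  have hmem : m ∈ univ.erase n := by simp [hne]
  rw [← Finset.add_sum_erase _ _ (mem_univ n), ← Finset.add_sum_erase _ _ hmem,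
    ← Finset.add_sum_erase univ _ (mem_univ n), ← Finset.add_sum_erase _ (fun p => f (α p + β' p)) hmem] at hm
  have hrest : ∑ p ∈ (univ.erase n).erase m, f (α p + β p) = ∑ p ∈ (univ.erase n).erase m, f (α p + β' p) := by
    refine Finset.sum_congr rfl fun p hp => ?_
    simp only [mem_erase] at hp
    simp [hβ', hp.1, hp.2.1]
  rw [hrest, hbm, hbn] at hm
  set x := α m + β m with hx
  set y := α n + β n with hy
  have hx0 : 0 ≤ x := add_nonneg (hα _) (hβ _)
  have hy0 : 0 ≤ y := add_nonneg (hα _) (hβ _)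
  have hD : 0 < y - x := by linarith
  set s := e / (y - x) with hs
  have hse : s * (y - x) = e := by rw [hs]; field_simp
  have hs0 : 0 < s := div_pos he0 hD
  have hs1 : 0 < 1 - s := by
    have : s < 1 := by rw [hs, div_lt_one hD]; linarith
    linarith
  have c1 := hf.2 (Set.mem_Ici.2 hx0) (Set.mem_Ici.2 hy0) hlt.ne hs1 hs0 (by ring)
  have c2 := hf.2 (Set.mem_Ici.2 hx0) (Set.mem_Ici.2 hy0) hlt.ne hs0 hs1 (by ring)
  simp only [smul_eq_mul] at c1 c2
  have w1 : (1 - s) * x + s * y = α m + (β m + e) := by rw [← hse, ← add_assoc, ← hx]; ring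
  have w2 : s * x + (1 - s) * y = α n + (β n - e) := by rw [← hse, ← add_sub_assoc, ← hy]; ring
  rw [w1] at c1
  rw [w2] at c2
  linarith

lemma simul_diag {d : ℕ} (A B : Matrix (Fin d) (Fin d) ℂ) (hA : A.IsHermitian)
    (hB : B.IsHermitian) (hAB : A * B = B * A) :
    ∃ (U : Matrix (Fin d) (Fin d) ℂ) (α β : Fin d → ℝ), U.conjTranspose * U = 1 ∧
      U * U.conjTranspose = 1 ∧
      A = U * Matrix.diagonal (fun m => (α m : ℂ)) * U.conjTranspose ∧
      B = U * Matrix.diagonal (fun m => (β m : ℂ)) * U.conjTranspose := by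
  classical
  have sA := Matrix.isSymmetric_toEuclideanLin_iff.2 hA
  have sB := Matrix.isSymmetric_toEuclideanLin_iff.2 hB
  have hc : Commute (Matrix.toEuclideanLin A) (Matrix.toEuclideanLin B) := by
    ext v i
    have : A.mulVec (B.mulVec v.ofLp) = B.mulVec (A.mulVec v.ofLp) := by
      rw [Matrix.mulVec_mulVec, Matrix.mulVec_mulVec, hAB]
    have := congrFun this i
    simpa [Matrix.toLpLin_apply] using this
  have hint := LinearMap.IsSymmetric.directSum_isInternal_of_commute sA sB hc
  have hort := LinearMap.IsSymmetric.orthogonalFamily_eigenspace_inf_eigenspace sA sB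
  set V := (fun i : ℂ × ℂ => Module.End.eigenspace (Matrix.toEuclideanLin A) i.2 ⊓
    Module.End.eigenspace (Matrix.toEuclideanLin B) i.1) with hV
  have hfin : {i | V i ≠ ⊥}.Finite := WellFoundedGT.finite_ne_bot_of_iSupIndep
    hint.submodule_iSupIndep
  haveI : Fintype {i // V i ≠ ⊥} := hfin.fintype
  have hint2 := DirectSum.isInternal_ne_bot_iff.2 hint
  have hort2 : OrthogonalFamily ℂ (fun i : {i // V i ≠ ⊥} => V i) fun i => (V i).subtypeₗᵢ :=
    hort.comp Subtype.val_injective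
  have hn : Module.finrank ℂ (EuclideanSpace ℂ (Fin d)) = d := by simp
  set b := hint2.subordinateOrthonormalBasis hn hort2 with hb
  have hmem := fun m => hint2.subordinateOrthonormalBasis_subordinate hn m hort2
  rw [← hb] at hmem
  have hev : ∀ m, ∃ x y : ℝ, Matrix.toEuclideanLin A (b m) = (x : ℂ) • b m ∧
      Matrix.toEuclideanLin B (b m) = (y : ℂ) • b m := by
    intro m
    obtain ⟨h1, h2⟩ := Submodule.mem_inf.1 (hmem m)
    have hne : b m ≠ 0 := b.orthonormal.ne_zero m
    have e1 := sA.conj_eigenvalue_eq_self (Module.End.hasEigenvalue_of_hasEigenvector ⟨h1, hne⟩)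
    have e2 := sB.conj_eigenvalue_eq_self (Module.End.hasEigenvalue_of_hasEigenvector ⟨h2, hne⟩)
    obtain ⟨x, hx⟩ := Complex.conj_eq_iff_real.1 e1
    obtain ⟨y, hy⟩ := Complex.conj_eq_iff_real.1 e2
    rw [hx] at h1
    rw [hy] at h2
    exact ⟨x, y, Module.End.mem_eigenspace_iff.1 h1, Module.End.mem_eigenspace_iff.1 h2⟩
  choose α β hα hβ using hev
  set U : Matrix (Fin d) (Fin d) ℂ := Matrix.of fun p m => b m p with hU
  have hUU : U.conjTranspose * U = 1 := by
    ext m n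
    have := orthonormal_iff_ite.1 b.orthonormal m n
    rw [Matrix.one_apply, ← this]
    simp [Matrix.mul_apply, hU, PiLp.inner_apply, mul_comm]
  have hUU' : U * U.conjTranspose = 1 := mul_eq_one_comm.1 hUU
  have hgen : ∀ (M : Matrix (Fin d) (Fin d) ℂ) (x : Fin d → ℝ),
      (∀ m, Matrix.toEuclideanLin M (b m) = (x m : ℂ) • b m) →
      M = U * Matrix.diagonal (fun m => (x m : ℂ)) * U.conjTranspose := by
    intro M x hx
    have : M * U = U * Matrix.diagonal (fun m => (x m : ℂ)) := by
      ext p m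
      have := congrArg (fun v : EuclideanSpace ℂ (Fin d) => v p) (hx m)
      simp only [Matrix.toLpLin_apply, Matrix.mulVec, dotProduct, PiLp.smul_apply, smul_eq_mul] at this
      rw [Matrix.mul_diagonal, Matrix.mul_apply]
      simp only [hU, Matrix.of_apply]
      rw [this, mul_comm]
    rw [← this, Matrix.mul_assoc, hUU', Matrix.mul_one]
  exact ⟨U, α, β, hUU, hUU', hgen A α hα, hgen B β hβ⟩

lemma pairing {d : ℕ} (α β lam μ : Fin d → ℝ) (hl : Monotone lam) (hm : Antitone μ)
    (σ τ : Equiv.Perm (Fin d)) (hσ : α ∘ σ = lam) (hτ : β ∘ τ = μ)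
    (hsq : ∑ i, (α i + β i) ^ 2 = ∑ i, (lam i + μ i) ^ 2) :
    ∃ ρ : Equiv.Perm (Fin d), α ∘ ρ = lam ∧ β ∘ ρ = μ := by
  have hanti : Antivary lam μ := hl.antivary hm
  set π : Equiv.Perm (Fin d) := σ.trans τ.symm with hπ
  have hμπ : ∀ i, μ (π i) = β (σ i) := by
    intro i; rw [← hτ]; simp [hπ]
  have hsum : ∑ i, lam i * μ (π i) = ∑ i, lam i * μ i := by
    have e1 : ∑ i, lam i * μ (π i) = ∑ i, α i * β i := by
      rw [← Equiv.sum_comp σ (fun i => α i * β i)]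
      refine Finset.sum_congr rfl fun i _ => ?_
      rw [hμπ, ← hσ]; rfl
    have e2 : ∑ i, (lam i) ^ 2 = ∑ i, (α i) ^ 2 := by
      rw [← Equiv.sum_comp σ (fun i => α i ^ 2), ← hσ]; rfl
    have e3 : ∑ i, (μ i) ^ 2 = ∑ i, (β i) ^ 2 := by
      rw [← Equiv.sum_comp τ (fun i => β i ^ 2), ← hτ]; rfl
    have e4 : ∀ x y : Fin d → ℝ, ∑ i, (x i + y i) ^ 2 =
        ∑ i, (x i) ^ 2 + ∑ i, (y i) ^ 2 + 2 * ∑ i, x i * y i := by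
      intro x y
      rw [Finset.mul_sum, ← Finset.sum_add_distrib, ← Finset.sum_add_distrib]
      refine Finset.sum_congr rfl fun i _ => ?_
      ring
    rw [e4, e4] at hsq
    rw [e1]; linarith
  have hav := (hanti.sum_mul_eq_sum_mul_comp_perm_iff).1 hsum
  have hab : ∀ m n, β m < β n → α n ≤ α m := by
    intro m n h
    have := @hav (σ.symm m) (σ.symm n)
    simp only [Function.comp, hμπ, Equiv.apply_symm_apply, ← hσ] at this
    exact this h
  set ρ := Tuple.sort (fun m => toLex (α m, OrderDual.toDual (β m))) with hρ
  have hmono := Tuple.monotone_sort (fun m => toLex (α m, OrderDual.toDual (β m)))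
  rw [← hρ] at hmono
  have hlex : ∀ i j, i ≤ j → α (ρ i) < α (ρ j) ∨ α (ρ i) = α (ρ j) ∧ β (ρ j) ≤ β (ρ i) := by
    intro i j hij
    have := hmono hij
    simpa [Prod.Lex.toLex_le_toLex] using this
  have h1 : Monotone (α ∘ ρ) := by
    intro i j hij
    rcases hlex i j hij with h | h
    · exact h.le
    · exact h.1.le
  have h2 : Antitone (β ∘ ρ) := by
    intro i j hij
    rcases hlex i j hij with h | h
    · by_contra hcon
      exact absurd (hab _ _ (not_le.1 hcon)) (not_le.2 h)
    · exact h.2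
  refine ⟨ρ, ?_, ?_⟩
  · rw [← hσ]; exact Tuple.unique_monotone h1 (by rw [hσ]; exact hl)
  · rw [← hτ]; exact Tuple.unique_antitone h2 (by rw [hτ]; exact hm)

lemma frameOp_commute {d k : ℕ} (S : Matrix (Fin d) (Fin d) ℂ) (hS : S.IsHermitian)
    (G : Fin k → Fin d → ℂ) (hJ : ∀ l : Fin k, ∃ c : ℝ, S.mulVec (G l) = (c : ℂ) • G l) :
    S * frameOp G = frameOp G * S := by
  unfold frameOp
  rw [Finset.mul_sum, Finset.sum_mul]
  refine Finset.sum_congr rfl fun l _ => ?_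
  obtain ⟨c, hc⟩ := hJ l
  have h2 : Matrix.vecMul (star (G l)) S = (c : ℂ) • star (G l) := by
    have := congrArg star hc
    rw [Matrix.star_mulVec, hS.eq] at this
    rw [this]; ext i; simp
  rw [Matrix.mul_vecMulVec, Matrix.vecMulVec_mul, hc, h2]
  ext i j
  simp [Matrix.vecMulVec_apply]; ring

lemma anti_of_min {d n₀ k : ℕ} 
    (F₀ : Fin n₀ → Fin d → ℂ) (a : Fin k → ℝ)
    (f : ℝ → ℝ) (hf : StrictConvexOn ℝ (Set.Ici 0) f)
    (G : Fin k → Fin d → ℂ) (hG : ∀ i, normSqVec (G i) = a i)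
    (hmin : ∀ G' : Fin k → Fin d → ℂ, (∀ i, normSqVec (G' i) = a i) →
      potential f (frameOp F₀ + frameOp G) ≤ potential f (frameOp F₀ + frameOp G'))
    (lam μ : Fin d → ℝ) (hlam : lam = eigsAsc (frameOp F₀)) (hμ : μ = eigsDesc (frameOp G))
    (hop : eigsDesc (frameOp F₀ + frameOp G) = sortDesc (fun i => lam i + μ i))
    (hJ : ∀ l : Fin k, ∃ c : ℝ,
      (frameOp F₀ + frameOp G).mulVec (G l) = (c : ℂ) • G l)
    (i j : Fin d) (hij : i ≤ j) (hj : μ j ≠ 0) : lam j + μ j ≤ lam i + μ i := by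
  have p0 := frameOp_psd F₀
  have pG := frameOp_psd G
  have hcS := frameOp_commute _ (p0.add pG).isHermitian G hJ
  have hc : frameOp F₀ * frameOp G = frameOp G * frameOp F₀ := by
    rw [Matrix.add_mul, Matrix.mul_add] at hcS
    exact add_right_cancel hcS
  obtain ⟨U, α, β, hU, hU', hS0, hSG⟩ := simul_diag _ _ p0.isHermitian pG.isHermitian hc
  obtain ⟨σ, hσ⟩ := eigs_perm _ U hU α hS0 p0.isHermitian
  obtain ⟨τ, hτ⟩ := eigs_perm _ U hU β hSG pG.isHermitian
  have hα : ∀ m, 0 ≤ α m := fun m => by rw [← hσ]; exact p0.eigenvalues_nonneg _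
  have hβ : ∀ m, 0 ≤ β m := fun m => by rw [← hτ]; exact pG.eigenvalues_nonneg _
  rw [eigsAsc, dif_pos p0.isHermitian] at hlam
  rw [eigsDesc, dif_pos pG.isHermitian] at hμ
  have hl : Monotone lam := by rw [hlam]; exact Tuple.monotone_sort _
  have hm : Antitone μ := by
    rw [hμ]; intro i j h
    exact Tuple.monotone_sort _ (Fin.rev_le_rev.2 h)
  have hsq : ∑ i, (α i + β i) ^ 2 = ∑ i, (lam i + μ i) ^ 2 := by
    rw [← sum_sortDesc (fun x => x ^ 2) (fun i => lam i + μ i), ← hop]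
    symm
    apply potential_diag (fun x => x ^ 2) _ U hU (fun i => α i + β i)
    conv_lhs => rw [hS0, hSG]
    rw [← Matrix.add_mul, ← Matrix.mul_add, Matrix.diagonal_add]; simp
  obtain ⟨ρ, h1, h2⟩ := pairing α β lam μ hl hm
    ((Tuple.sort p0.isHermitian.eigenvalues).trans σ.symm)
    (Fin.revPerm.trans ((Tuple.sort pG.isHermitian.eigenvalues).trans τ.symm))
    (by ext i; rw [hlam, ← hσ]; simp [sortAsc]) (by ext i; rw [hμ, ← hτ]; simp [sortDesc]) hsq
  have g1 : ∀ i, lam i = α (ρ i) := fun i => by rw [← h1]; rfl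
  have g2 : ∀ i, μ i = β (ρ i) := fun i => by rw [← h2]; rfl
  have hle := hm hij
  rw [g2] at hj
  rw [g2, g2] at hle
  rw [g1, g1, g2, g2]
  exact not_lt.1 (key _ a f hf G hG hmin hJ U hU hU' α β hS0 hSG hα hβ (ρ i) (ρ j)
    (lt_of_le_of_ne (hβ _) hj.symm) hle)

theorem stmt_16 {d n₀ k : ℕ} (hdk : d ≤ k)
    (F₀ : Fin n₀ → Fin d → ℂ) (a : Fin k → ℝ)
    (ha_pos : ∀ i, 0 < a i) (ha_mono : Antitone a)
    (f : ℝ → ℝ) (hf : StrictConvexOn ℝ (Set.Ici 0) f) (hf0 : ∀ x ∈ Set.Ici (0 : ℝ), 0 ≤ f x)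
    (G : Fin k → Fin d → ℂ) (hG : ∀ i, normSqVec (G i) = a i)
    (hmin : ∀ G' : Fin k → Fin d → ℂ, (∀ i, normSqVec (G' i) = a i) →
      potential f (frameOp F₀ + frameOp G) ≤ potential f (frameOp F₀ + frameOp G'))
    (lam μ : Fin d → ℝ) (hlam : lam = eigsAsc (frameOp F₀)) (hμ : μ = eigsDesc (frameOp G))
    (sF : ℕ) (hsF : sF = (frameOp G).rank)
    (hsmu : ∀ i : Fin d, μ i ≠ 0 ↔ (i : ℕ) < sF)
    (hop : eigsDesc (frameOp F₀ + frameOp G) = sortDesc (fun i => lam i + μ i))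
    (p : ℕ) (hp1 : 1 < p) (c : Fin p → ℝ) (hcanti : StrictAnti c) (hcpos : ∀ j, 0 < c j)
    (hKcover : ∀ i : Fin d, (i : ℕ) < sF → ∃ j : Fin p, lam i + μ i = c j)
    (hKattain : ∀ j : Fin p, ∃ i : Fin d, (i : ℕ) < sF ∧ lam i + μ i = c j)
    (hJcover : ∀ l : Fin k, ∃ j : Fin p,
      (frameOp F₀ + frameOp G).mulVec (G l) = (c j : ℂ) • G l) :
    (∀ i j : Fin d, (i : ℕ) < sF → (j : ℕ) < sF →
      lam i + μ i = c ⟨0, by omega⟩ →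
      (∃ r : Fin p, 0 < (r : ℕ) ∧ lam j + μ j = c r) → i < j) ∧
    (∀ r : Fin p, ∀ i₁ i₂ i₃ : Fin d, i₁ ≤ i₂ → i₂ ≤ i₃ →
      (i₁ : ℕ) < sF → (i₃ : ℕ) < sF → lam i₁ + μ i₁ = c r → lam i₃ + μ i₃ = c r →
      ((i₂ : ℕ) < sF ∧ lam i₂ + μ i₂ = c r)) ∧
    (∀ r r' : Fin p, r < r' → ∀ i j : Fin d, (i : ℕ) < sF → (j : ℕ) < sF →
      lam i + μ i = c r → lam j + μ j = c r' → i < j) := by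
  have hanti : ∀ i j : Fin d, i ≤ j → (j : ℕ) < sF → lam j + μ j ≤ lam i + μ i :=
    fun i j hij hj => anti_of_min F₀ a f hf G hG hmin lam μ hlam hμ hop
      (fun l => (hJcover l).imp' c fun _ h => h) i j hij ((hsmu j).2 hj)
  have h3 : ∀ r r' : Fin p, r < r' → ∀ i j : Fin d, (i : ℕ) < sF → (j : ℕ) < sF →
      lam i + μ i = c r → lam j + μ j = c r' → i < j := by
    intro r r' hr i j hi hj h1 h2
    by_contra hcon
    have h4 := hanti j i (not_lt.1 hcon) hi
    have h5 := hcanti hr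
    linarith
  refine ⟨?_, ?_, h3⟩
  · rintro i j hi hj h1 ⟨r, hr, h2⟩
    exact h3 ⟨0, by omega⟩ r (Fin.lt_def.2 hr) i j hi hj h1 h2
  · intro r i₁ i₂ i₃ h12 h23 hi1 hi3 e1 e3
    have hi2 : (i₂ : ℕ) < sF := lt_of_le_of_lt (Fin.le_def.1 h23) hi3
    have := hanti _ _ h12 hi2
    have := hanti _ _ h23 hi3
    exact ⟨hi2, by linarith⟩
end
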